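/- arXiv:2203.10915 — 3 statements merged into one kernel-verified Lean document; each statement's English description precedes it below -/
import Mathlib

section
/- For any ν ∈ ℂ, lim_{x → +∞} K_ν(x) / ((π/(2x))^{1/2} e^{−x}) = 1, where x ranges over positive reals. -/
/-!
For `0 < Re z` one has `K_ν(z) = (1 / 2) ∫_ℝ exp (ν u - z cosh u) du`, and the asymptotics follow by
Laplace's method: after the substitution `u = v / √x` the integrand times `eˣ` converges pointwise
to the Gaussian `exp (-v² / 2)`, and for `x ≥ 1` it is dominated by `exp (-v² / 2 + |Re ν| |v|)`,
because `1 + u² / 2 ≤ cosh u`.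

Let `k_ν` denote the integral, to be identified with the series definition of `K_ν`. Since `k_ν` and
`I_ν` satisfy recurrences in `ν` that differ only by signs, `W_ν(z) = z (I_ν k_{ν+1} + I_{ν+1} k_ν)`
is constant in `z` and invariant under `ν ↦ ν + 1`. For `0 < Re ν` and real `z` the substitution
`t = (z / 2) eᵘ` turns `k_ν`, up to a power of `z`, into an integral converging to Euler's integral
for `Γ(ν)` as `z → 0⁺`, so `W_ν = 1`, and the shift invariance removes the restriction on `ν`.
Eliminating `k_{ν+1}` from `W_ν = 1` and `W_{-ν-1} = 1` leaves `k_ν` times the Wronskian of `I_ν`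
and `I_{-ν}`, which the reflection formula for `Γ` evaluates as a multiple of `sin (ν π)`. Integer
orders follow by continuity in `ν`.
-/

open Filter Set MeasureTheory
open scoped Real Classical

/-- The modified Bessel function of the first kind
`I_ν(z) = Σ_{n=0}^∞ (z/2)^{ν+2n} / (n! Γ(n+ν+1))`, with the principal branch of powers.
(When `ν` is a negative integer the terms with `n + ν + 1 ≤ 0` vanish, since Mathlib's
`Complex.Gamma` vanishes at nonpositive integers, implementing the convention that the sum
starts at `n = -ν`.) -/
noncomputable def besselI (ν z : ℂ) : ℂ :=
  ∑' n : ℕ, (z / 2) ^ (ν + 2 * (n : ℂ)) / ((n.factorial : ℂ) * Complex.Gamma ((n : ℂ) + ν + 1))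

/-- The modified Bessel function of the second kind:
`K_ν = (π / (2 sin (νπ))) (I_{-ν} - I_ν)` for non-integer `ν`, and for integer `ν` the limit
of this expression as the order tends to `ν`. -/

noncomputable def besselK (ν z : ℂ) : ℂ :=
  if ∃ n : ℤ, ν = (n : ℂ) then
    limUnder (nhdsWithin ν {ν}ᶜ)
      (fun μ => ((Real.pi : ℂ) / (2 * Complex.sin (μ * (Real.pi : ℂ)))) *
        (besselI (-μ) z - besselI μ z))
  else ((Real.pi : ℂ) / (2 * Complex.sin (ν * (Real.pi : ℂ)))) * (besselI (-ν) z - besselI ν z)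

/-- The entire function `₀F₁(; c; z) / Γ(c) = Σ zⁿ / (n! Γ(c + n))`, carrying the power series of
the Bessel functions: `I_ν(z) = (z / 2) ^ ν * hypergeometric01 (ν + 1) ((z / 2) ^ 2)`. -/
noncomputable def hypergeometric01 (c z : ℂ) : ℂ := Complex.regularizedHGFun 0 {c} z

section Hypergeometric

lemma regularizedHGFunCoeff_zero_singleton (c : ℂ) (n : ℕ) :
    Complex.regularizedHGFunCoeff 0 {c} n = ((n.factorial : ℂ) * Complex.Gamma (c + n))⁻¹ := by
  simp [Complex.regularizedHGFunCoeff]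

lemma hasFPowerSeriesOnBall_hypergeometric01 (c : ℂ) :
    HasFPowerSeriesOnBall (hypergeometric01 c) (Complex.regularizedHGFunSeries 0 {c}) 0 ⊤ := by
  have hr := Complex.radius_regularizedHGFunSeries_eq_top (a := 0) (b := {c}) (by simp)
  have h := (Complex.regularizedHGFunSeries 0 {c}).hasFPowerSeriesOnBall (by simp [hr])
  rwa [hr] at h

lemma hasSum_hypergeometric01 (c z : ℂ) :
    HasSum (fun n : ℕ => z ^ n / ((n.factorial : ℂ) * Complex.Gamma (c + n)))
      (hypergeometric01 c z) := by
  simpa [FormalMultilinearSeries.apply_eq_pow_smul_coeff, regularizedHGFunCoeff_zero_singleton,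
    div_eq_mul_inv] using (hasFPowerSeriesOnBall_hypergeometric01 c).hasSum_sub (y := z) (by simp)

lemma hypergeometric01_zero (c : ℂ) : hypergeometric01 c 0 = (Complex.Gamma c)⁻¹ := by
  refine (hasSum_hypergeometric01 c 0).unique ?_
  convert hasSum_single (f := fun n : ℕ => (0 : ℂ) ^ n / (n.factorial * Complex.Gamma (c + n))) 0
    fun n hn => by simp [hn] using 1
  simp

lemma hasDerivAt_hypergeometric01 (c z : ℂ) :
    HasDerivAt (hypergeometric01 c) (hypergeometric01 (c + 1) z) z := by
  have hp := hasFPowerSeriesOnBall_hypergeometric01 c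
  have hsum : HasSum (fun n : ℕ => z ^ n / ((n.factorial : ℂ) * Complex.Gamma (c + 1 + n)))
      (deriv (hypergeometric01 c) z) := by
    have h := (hp.fderiv.hasSum_sub (y := z) (by simp)).mapL
      (ContinuousLinearMap.apply ℂ ℂ (1 : ℂ))
    simp only [sub_zero, FormalMultilinearSeries.apply_eq_pow_smul_coeff, map_smul,
      ContinuousLinearMap.apply_apply, FormalMultilinearSeries.derivSeries_coeff_one,
      Complex.regularizedHGFunSeries_coeff, regularizedHGFunCoeff_zero_singleton,
      fderiv_eq_smul_deriv, one_smul] at h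
    refine h.congr_fun fun n => ?_
    have hn : (n : ℂ) + 1 ≠ 0 := n.cast_add_one_ne_zero
    rw [Nat.factorial_succ, show c + 1 + n = c + (n + 1 : ℕ) by push_cast; ring]
    simp only [nsmul_eq_mul, smul_eq_mul, Nat.cast_mul, Nat.cast_succ]
    field_simp
  rw [(hasSum_hypergeometric01 (c + 1) z).unique hsum]
  exact (hp.differentiableOn.differentiableAt (by simp)).hasDerivAt

lemma continuous_hypergeometric01 (c : ℂ) : Continuous (hypergeometric01 c) :=
  continuous_iff_continuousAt.2 fun z => (hasDerivAt_hypergeometric01 c z).continuousAt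

lemma hypergeometric01_eq_add (c z : ℂ) :
    hypergeometric01 c z = c * hypergeometric01 (c + 1) z + z * hypergeometric01 (c + 2) z := by
  have hshift : HasSum (fun n : ℕ => n * (z ^ n / ((n.factorial : ℂ) * Complex.Gamma (c + 1 + n))))
      (z * hypergeometric01 (c + 2) z) := by
    refine (hasSum_nat_add_iff' 1).1 ?_
    simp only [Finset.sum_range_one, Nat.cast_zero, zero_mul, sub_zero]
    refine ((hasSum_hypergeometric01 (c + 2) z).mul_left z).congr_fun fun n => ?_
    have hn : (n : ℂ) + 1 ≠ 0 := n.cast_add_one_ne_zero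
    rw [Nat.factorial_succ, pow_succ', show c + 1 + (n + 1 : ℕ) = c + 2 + n by push_cast; ring]
    push_cast
    field_simp
  refine (hasSum_hypergeometric01 c z).unique
    ((((hasSum_hypergeometric01 (c + 1) z).mul_left c).add hshift).congr_fun fun n => ?_)
  rw [div_eq_mul_inv _ (_ * Complex.Gamma (c + n)), mul_inv,
    Complex.one_div_Gamma_eq_self_mul_one_div_Gamma_add_one (c + n), add_right_comm c 1]
  ring

lemma hypergeometric01_wronskian (c z : ℂ) :
    hypergeometric01 c z * hypergeometric01 (1 - c) z -
        z * (hypergeometric01 (c + 1) z * hypergeometric01 (2 - c) z) =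
      Complex.sin (π * c) / π := by
  set W : ℂ → ℂ := fun z => hypergeometric01 c z * hypergeometric01 (1 - c) z -
    z * (hypergeometric01 (c + 1) z * hypergeometric01 (2 - c) z)
  have hW : ∀ z, HasDerivAt W 0 z := by
    intro z
    have h := ((hasDerivAt_hypergeometric01 c z).fun_mul
      (hasDerivAt_hypergeometric01 (1 - c) z)).fun_sub ((hasDerivAt_id' z).fun_mul
      ((hasDerivAt_hypergeometric01 (c + 1) z).fun_mul (hasDerivAt_hypergeometric01 (2 - c) z)))
    refine h.congr_deriv ?_
    rw [hypergeometric01_eq_add c, hypergeometric01_eq_add (1 - c),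
      show 1 - c + 1 = 2 - c by ring, show 1 - c + 2 = 2 - c + 1 by ring,
      show c + 1 + 1 = c + 2 by ring]
    ring
  calc W z = W 0 := is_const_of_deriv_eq_zero (fun w => (hW w).differentiableAt)
        (fun w => (hW w).deriv) z 0
    _ = (Complex.Gamma c * Complex.Gamma (1 - c))⁻¹ := by
      simp [W, hypergeometric01_zero, mul_comm]
    _ = Complex.sin (π * c) / π := by rw [Complex.Gamma_mul_Gamma_one_sub, inv_div]

end Hypergeometric

section BesselI

variable (ν : ℂ) {z : ℂ}

lemma besselI_eq_cpow_mul_hypergeometric01 (hz : z ≠ 0) :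
    besselI ν z = (z / 2) ^ ν * hypergeometric01 (ν + 1) ((z / 2) ^ 2) := by
  have hz2 : z / 2 ≠ 0 := div_ne_zero hz two_ne_zero
  refine HasSum.tsum_eq (((hasSum_hypergeometric01 (ν + 1) _).mul_left _).congr_fun fun n => ?_)
  rw [Complex.cpow_add _ _ hz2, Complex.cpow_ofNat_mul, Complex.cpow_natCast, pow_right_comm,
    mul_div_assoc, add_assoc, add_comm (n : ℂ)]

lemma besselI_eq_add (hz : z ≠ 0) :
    besselI ν z = besselI (ν + 2) z + 2 * (ν + 1) / z * besselI (ν + 1) z := by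
  have hz2 : z / 2 ≠ 0 := div_ne_zero hz two_ne_zero
  simp only [besselI_eq_cpow_mul_hypergeometric01 _ hz]
  rw [hypergeometric01_eq_add, Complex.cpow_add _ _ hz2, Complex.cpow_add _ _ hz2,
    Complex.cpow_one, Complex.cpow_ofNat, add_right_comm ν 2, add_assoc ν 1 1, one_add_one_eq_two]
  field_simp
  ring

lemma hasDerivAt_besselI (hz : z ∈ Complex.slitPlane) :
    HasDerivAt (besselI ν) (besselI (ν + 1) z + ν / z * besselI ν z) z := by
  have hz0 : z ≠ 0 := Complex.slitPlane_ne_zero hz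
  have hz2 : z / 2 ≠ 0 := div_ne_zero hz0 two_ne_zero
  have hslit : z / 2 ∈ Complex.slitPlane := by simpa [Complex.mem_slitPlane_iff] using hz
  have hhalf : HasDerivAt (fun w : ℂ => w / 2) (1 / 2) z := (hasDerivAt_id' z).div_const 2
  have h := (hhalf.cpow_const (c := ν) hslit).fun_mul
    ((hasDerivAt_hypergeometric01 (ν + 1) ((z / 2) ^ 2)).comp z (hhalf.fun_pow 2))
  have heq : besselI ν =ᶠ[nhds z]
      fun w => (w / 2) ^ ν * hypergeometric01 (ν + 1) ((w / 2) ^ 2) := by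
    filter_upwards [isOpen_ne.mem_nhds hz0] with w hw
    exact besselI_eq_cpow_mul_hypergeometric01 ν hw
  refine (h.congr_of_eventuallyEq heq).congr_deriv ?_
  rw [besselI_eq_cpow_mul_hypergeometric01 _ hz0, besselI_eq_cpow_mul_hypergeometric01 _ hz0,
    Complex.cpow_sub _ _ hz2, Complex.cpow_add _ _ hz2, Complex.cpow_one]
  simp only [Function.comp_apply]
  push_cast
  field_simp
  ring

lemma hasDerivAt_besselI_add_one (hz : z ∈ Complex.slitPlane) :
    HasDerivAt (besselI (ν + 1)) (besselI ν z - (ν + 1) / z * besselI (ν + 1) z) z := by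
  refine (hasDerivAt_besselI (ν + 1) hz).congr_deriv ?_
  rw [besselI_eq_add ν (Complex.slitPlane_ne_zero hz), add_assoc, one_add_one_eq_two]
  ring

lemma besselI_wronskian (hz : z ≠ 0) :
    besselI (ν + 1) z * besselI (-ν) z - besselI (-ν - 1) z * besselI ν z =
      2 * Complex.sin (π * ν) / (π * z) := by
  have hz2 : z / 2 ≠ 0 := div_ne_zero hz two_ne_zero
  have hpow : (z / 2) ^ (ν + 1) * (z / 2) ^ (-ν) = 2 / z * (z / 2) ^ 2 := by
    rw [← Complex.cpow_add _ _ hz2, add_neg_cancel_comm, Complex.cpow_one]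
    field_simp
  have hpow' : (z / 2) ^ (-ν - 1) * (z / 2) ^ ν = 2 / z := by
    rw [← Complex.cpow_add _ _ hz2, show -ν - 1 + ν = -1 by ring, Complex.cpow_neg_one, inv_div]
  have h := hypergeometric01_wronskian (ν + 1) ((z / 2) ^ 2)
  rw [mul_add, mul_one, Complex.sin_add_pi, show 1 - (ν + 1) = -ν by ring,
    show 2 - (ν + 1) = -ν + 1 by ring] at h
  simp only [besselI_eq_cpow_mul_hypergeometric01 _ hz, sub_add_cancel]
  rw [mul_mul_mul_comm, mul_mul_mul_comm ((z / 2) ^ (-ν - 1)), hpow, hpow']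
  linear_combination -(2 / z) * h

end BesselI

/-- The integrand `exp (ν u - z cosh u)` of `besselKIntegral`. -/
noncomputable def besselKKernel (ν z : ℂ) (u : ℝ) : ℂ :=
  Complex.exp (ν * u - z * (Real.cosh u : ℂ))

/-- The integral `(1 / 2) ∫_ℝ exp (ν u - z cosh u) du`, which represents `K_ν(z)` for `0 < Re z`
(see `besselK_eq_besselKIntegral`). -/
noncomputable def besselKIntegral (ν z : ℂ) : ℂ := 1 / 2 * ∫ u : ℝ, besselKKernel ν z u

section Kernel

lemma one_add_sq_div_two_le_cosh (u : ℝ) : 1 + u ^ 2 / 2 ≤ Real.cosh u := by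
  simpa [Finset.sum_range_succ] using sum_le_hasSum (Finset.range 2)
    (fun n _ => div_nonneg ((even_two_mul n).pow_nonneg u) (by positivity)) (Real.hasSum_cosh u)

lemma integrable_exp_neg_mul_sq_add_mul_abs {b : ℝ} (hb : 0 < b) (R : ℝ) :
    Integrable fun u : ℝ => Real.exp (-b * u ^ 2 + R * |u|) := by
  refine ((integrable_exp_neg_mul_sq (half_pos hb)).const_mul
    (Real.exp (R ^ 2 / (2 * b)))).mono' (by fun_prop) (ae_of_all _ fun u => ?_)
  rw [Real.norm_of_nonneg (Real.exp_nonneg _), ← Real.exp_add, Real.exp_le_exp]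
  have hsq : 0 ≤ (b * |u| - R) ^ 2 / (2 * b) := by positivity
  have hexpand : (b * |u| - R) ^ 2 / (2 * b) = b / 2 * u ^ 2 - R * |u| + R ^ 2 / (2 * b) := by
    rw [← sq_abs u]
    field_simp
    ring
  linarith

variable (ν : ℂ) {z : ℂ}

lemma continuous_besselKKernel (z : ℂ) : Continuous (besselKKernel ν z) := by
  unfold besselKKernel
  fun_prop

lemma norm_besselKKernel (z : ℂ) (u : ℝ) :
    ‖besselKKernel ν z u‖ = Real.exp (ν.re * u - z.re * Real.cosh u) := by
  rw [besselKKernel, Complex.norm_exp, Complex.sub_re, Complex.re_mul_ofReal,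
    Complex.re_mul_ofReal]

lemma norm_besselKKernel_le_gaussian {ν : ℂ} {R : ℝ} (hν : |ν.re| ≤ R) (hz : 0 ≤ z.re) (u : ℝ) :
    ‖besselKKernel ν z u‖ ≤ Real.exp (-z.re) * Real.exp (-(z.re / 2) * u ^ 2 + R * |u|) := by
  rw [norm_besselKKernel, ← Real.exp_add, Real.exp_le_exp]
  have hcosh := mul_le_mul_of_nonneg_left (one_add_sq_div_two_le_cosh u) hz
  have hlin : ν.re * u ≤ R * |u| :=
    (le_abs_self _).trans ((abs_mul _ _).trans_le (by gcongr))
  linarith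

lemma norm_besselKKernel_le_of_re_le {w : ℂ} (h : z.re ≤ w.re) (u : ℝ) :
    ‖besselKKernel ν w u‖ ≤ ‖besselKKernel ν z u‖ := by
  have := Real.cosh_pos u
  rw [norm_besselKKernel, norm_besselKKernel]
  gcongr

lemma integrable_besselKKernel (hz : 0 < z.re) : Integrable (besselKKernel ν z) :=
  ((integrable_exp_neg_mul_sq_add_mul_abs (half_pos hz) |ν.re|).const_mul _).mono'
    (continuous_besselKKernel ν z).aestronglyMeasurable
    (ae_of_all _ (norm_besselKKernel_le_gaussian le_rfl hz.le))

lemma besselKKernel_add_one (z : ℂ) (u : ℝ) :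
    besselKKernel (ν + 1) z u = Real.exp u * besselKKernel ν z u := by
  rw [besselKKernel, besselKKernel, Complex.ofReal_exp, ← Complex.exp_add]
  ring_nf

lemma besselKKernel_sub_one (z : ℂ) (u : ℝ) :
    besselKKernel (ν - 1) z u = Real.exp (-u) * besselKKernel ν z u := by
  rw [besselKKernel, besselKKernel, Complex.ofReal_exp, ← Complex.exp_add]
  push_cast
  ring_nf

lemma hasDerivAt_besselKKernel (z : ℂ) (u : ℝ) :
    HasDerivAt (besselKKernel ν z) (ν * besselKKernel ν z u -
      z / 2 * (besselKKernel (ν + 1) z u - besselKKernel (ν - 1) z u)) u := by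
  have h := (((hasDerivAt_id u).ofReal_comp.const_mul ν).fun_sub
    ((Real.hasDerivAt_cosh u).ofReal_comp.const_mul z)).cexp
  refine HasDerivAt.congr_deriv h ?_
  rw [besselKKernel_add_one, besselKKernel_sub_one, Real.sinh_eq]
  simp only [besselKKernel, id]
  push_cast
  ring

lemma hasDerivAt_besselKKernel_right (z : ℂ) (u : ℝ) :
    HasDerivAt (besselKKernel ν · u)
      (-((besselKKernel (ν + 1) z u + besselKKernel (ν - 1) z u) / 2)) z := by
  have h := (((hasDerivAt_id' z).mul_const (Real.cosh u : ℂ)).const_sub (ν * u)).cexp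
  refine HasDerivAt.congr_deriv h ?_
  rw [besselKKernel_add_one, besselKKernel_sub_one, Real.cosh_eq]
  simp only [besselKKernel, Real.cosh_eq]
  push_cast
  ring

end Kernel

section Integral

variable (ν : ℂ) {z : ℂ}

lemma besselKIntegral_neg (z : ℂ) : besselKIntegral (-ν) z = besselKIntegral ν z := by
  rw [besselKIntegral, besselKIntegral, ← integral_neg_eq_self]
  simp [besselKKernel]

lemma besselKIntegral_add_one_sub (hz : 0 < z.re) :
    z * (besselKIntegral (ν + 1) z - besselKIntegral (ν - 1) z) = 2 * ν * besselKIntegral ν z := by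
  have hint := fun ν => integrable_besselKKernel ν hz
  have hdiff : Integrable fun u : ℝ =>
      z / 2 * (besselKKernel (ν + 1) z u - besselKKernel (ν - 1) z u) :=
    ((hint _).sub (hint _)).const_mul _
  have h := integral_eq_zero_of_hasDerivAt_of_integrable (hasDerivAt_besselKKernel ν z)
    (((hint _).const_mul _).sub hdiff) (hint ν)
  rw [integral_sub ((hint _).const_mul _) hdiff, integral_const_mul, integral_const_mul,
    integral_sub (hint _) (hint _)] at h
  simp only [besselKIntegral]
  linear_combination -h

lemma hasDerivAt_besselKIntegral_neg_add_div_two (hz : 0 < z.re) :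
    HasDerivAt (besselKIntegral ν)
      (-((besselKIntegral (ν + 1) z + besselKIntegral (ν - 1) z) / 2)) z := by
  have hint := fun ν => integrable_besselKKernel ν hz
  have hhalf : 0 < ((z.re / 2 : ℝ) : ℂ).re := by simpa using hz
  have hbound : ∀ ν (u : ℝ) (w : ℂ), z.re / 2 < w.re →
      ‖besselKKernel ν w u‖ ≤ ‖besselKKernel ν (z.re / 2 : ℝ) u‖ :=
    fun ν u w hw => norm_besselKKernel_le_of_re_le ν (by simpa using hw.le) u
  have h := (hasDerivAt_integral_of_dominated_loc_of_deriv_le (μ := volume)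
    (bound := fun u => (‖besselKKernel (ν + 1) (z.re / 2 : ℝ) u‖ +
      ‖besselKKernel (ν - 1) (z.re / 2 : ℝ) u‖) / 2)
    ((isOpen_lt continuous_const Complex.continuous_re).mem_nhds (half_lt_self hz))
    (Eventually.of_forall fun w => (continuous_besselKKernel ν w).aestronglyMeasurable)
    (hint ν)
    (((hint _).add (hint _)).div_const 2).neg.aestronglyMeasurable
    (ae_of_all _ fun u w hw => ?_)
    (((integrable_besselKKernel _ hhalf).norm.add
      (integrable_besselKKernel _ hhalf).norm).div_const 2)
    (ae_of_all _ fun u w _ => hasDerivAt_besselKKernel_right ν w u)).2.const_mul (1 / 2)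
  · refine h.congr_deriv ?_
    rw [integral_neg, integral_div, integral_add (hint _) (hint _)]
    simp only [besselKIntegral]
    ring
  · simp only [norm_neg, norm_div, Complex.norm_ofNat]
    gcongr
    exact (norm_add_le _ _).trans (add_le_add (hbound _ u w hw) (hbound _ u w hw))

lemma hasDerivAt_besselKIntegral (hz : 0 < z.re) :
    HasDerivAt (besselKIntegral ν)
      (ν / z * besselKIntegral ν z - besselKIntegral (ν + 1) z) z := by
  refine (hasDerivAt_besselKIntegral_neg_add_div_two ν hz).congr_deriv ?_
  have hz0 : z ≠ 0 := Complex.ne_zero_of_re_pos hz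
  field_simp
  linear_combination besselKIntegral_add_one_sub ν hz

lemma hasDerivAt_besselKIntegral_add_one (hz : 0 < z.re) :
    HasDerivAt (besselKIntegral (ν + 1))
      (-besselKIntegral ν z - (ν + 1) / z * besselKIntegral (ν + 1) z) z := by
  refine (hasDerivAt_besselKIntegral (ν + 1) hz).congr_deriv ?_
  have h := besselKIntegral_add_one_sub (ν + 1) hz
  rw [add_sub_cancel_right] at h
  have hz0 : z ≠ 0 := Complex.ne_zero_of_re_pos hz
  field_simp
  linear_combination -h

lemma continuous_besselKIntegral_left (hz : 0 < z.re) : Continuous (besselKIntegral · z) := by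
  refine continuous_const.mul (continuous_iff_continuousAt.2 fun ν => ?_)
  refine tendsto_integral_filter_of_dominated_convergence _
    (Eventually.of_forall fun μ => (continuous_besselKKernel μ z).aestronglyMeasurable) ?_
    ((integrable_exp_neg_mul_sq_add_mul_abs (half_pos hz) (|ν.re| + 1)).const_mul
      (Real.exp (-z.re)))
    (ae_of_all _ fun u => ?_)
  · have hre : Tendsto (fun μ : ℂ => |μ.re|) (nhds ν) (nhds |ν.re|) :=
      (continuous_abs.comp Complex.continuous_re).tendsto ν
    filter_upwards [hre.eventually_le_const (lt_add_one _)] with μ hμ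
    exact ae_of_all _ (norm_besselKKernel_le_gaussian hμ hz.le)
  · unfold besselKKernel
    exact Continuous.tendsto (by fun_prop) ν

end Integral

section SmallArgument

lemma integral_exp_smul_comp_exp {E : Type*} [NormedAddCommGroup E] [NormedSpace ℝ E]
    (g : ℝ → E) : ∫ u : ℝ, Real.exp u • g (Real.exp u) = ∫ t in Ioi 0, g t := by
  simpa [Real.range_exp, abs_of_pos (Real.exp_pos _)] using
    (integral_image_eq_integral_abs_deriv_smul MeasurableSet.univ
      (fun u _ => (Real.hasDerivAt_exp u).hasDerivWithinAt) Real.exp_injective.injOn g).symm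

variable {ν : ℂ}

lemma two_mul_cpow_mul_besselKIntegral (ν : ℂ) {x : ℝ} (hx : 0 < x) :
    2 * ((x : ℂ) / 2) ^ ν * besselKIntegral ν x =
      ∫ t in Ioi (0 : ℝ), (Real.exp (-t - (x / 2) ^ 2 / t) : ℂ) * (t : ℂ) ^ (ν - 1) := by
  have hx2 : 0 < x / 2 := half_pos hx
  -- The substitution is `t = (x / 2) eᵘ`, done as a translation followed by `t = eᵘ`.
  rw [← integral_exp_smul_comp_exp, ← integral_add_right_eq_self _ (Real.log (x / 2)),
    besselKIntegral, ← mul_assoc, ← integral_const_mul]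
  refine integral_congr_ae (ae_of_all _ fun u => ?_)
  have ht : Real.exp (u + Real.log (x / 2)) ≠ 0 := Real.exp_ne_zero _
  have hpow : (Real.exp (u + Real.log (x / 2)) : ℂ) ^ ν =
      Complex.exp (ν * u) * ((x : ℂ) / 2) ^ ν := by
    rw [Real.exp_add, Real.exp_log hx2, Complex.ofReal_mul,
      Complex.mul_cpow_ofReal_nonneg (Real.exp_nonneg u) hx2.le,
      Complex.cpow_def_of_ne_zero (Complex.ofReal_ne_zero.2 (Real.exp_ne_zero u)),
      ← Complex.ofReal_log (Real.exp_nonneg u), Real.log_exp, mul_comm ν, Complex.ofReal_div,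
      Complex.ofReal_ofNat]
  have hcosh : x * Real.cosh u = Real.exp (u + Real.log (x / 2)) +
      (x / 2) ^ 2 / Real.exp (u + Real.log (x / 2)) := by
    rw [Real.exp_add, Real.exp_log hx2, Real.cosh_eq, Real.exp_neg]
    field_simp
  beta_reduce
  generalize Real.exp (u + Real.log (x / 2)) = t at ht hpow hcosh ⊢
  have htc : (t : ℂ) ≠ 0 := Complex.ofReal_ne_zero.2 ht
  rw [Complex.cpow_sub _ _ htc, Complex.cpow_one, hpow, besselKKernel, ← Complex.ofReal_mul, hcosh,
    Complex.exp_sub, Complex.real_smul, ← neg_add', Real.exp_neg, Complex.ofReal_inv,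
    Complex.ofReal_exp]
  field_simp

lemma tendsto_two_mul_cpow_mul_besselKIntegral_nhdsGT_zero (hν : 0 < ν.re) :
    Tendsto (fun x : ℝ => 2 * ((x : ℂ) / 2) ^ ν * besselKIntegral ν x) (nhdsWithin 0 (Ioi 0))
      (nhds (Complex.Gamma ν)) := by
  have h : Tendsto (fun x : ℝ => ∫ t in Ioi (0 : ℝ),
      (Real.exp (-t - (x / 2) ^ 2 / t) : ℂ) * (t : ℂ) ^ (ν - 1)) (nhdsWithin 0 (Ioi 0))
      (nhds (∫ t in Ioi (0 : ℝ), (Real.exp (-t) : ℂ) * (t : ℂ) ^ (ν - 1))) := by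
    refine tendsto_integral_filter_of_dominated_convergence _
      (Eventually.of_forall fun x => Measurable.aestronglyMeasurable (by fun_prop))
      (Eventually.of_forall fun x => (ae_restrict_iff' measurableSet_Ioi).2 <|
        ae_of_all _ fun t ht => ?_)
      (Complex.GammaIntegral_convergent hν).norm (ae_of_all _ fun t => ?_)
    · have := mem_Ioi.1 ht
      rw [norm_mul, norm_mul, Complex.norm_real, Complex.norm_real,
        Real.norm_of_nonneg (Real.exp_nonneg _), Real.norm_of_nonneg (Real.exp_nonneg _)]
      gcongr
      exact sub_le_self _ (by positivity)
    · have hcont : Continuous fun x : ℝ =>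
          (Real.exp (-t - (x / 2) ^ 2 / t) : ℂ) * (t : ℂ) ^ (ν - 1) := by fun_prop
      simpa using (hcont.tendsto 0).mono_left nhdsWithin_le_nhds
  rw [Complex.Gamma_eq_integral hν]
  refine h.congr' ?_
  filter_upwards [self_mem_nhdsWithin] with x hx
  exact (two_mul_cpow_mul_besselKIntegral ν hx).symm

end SmallArgument

/-- The Wronskian of `K_ν` and `I_ν` times `z`, with `K_ν` given by `besselKIntegral` and the
derivatives expressed through the orders `ν` and `ν + 1`. -/
noncomputable def besselWronskian (ν z : ℂ) : ℂ :=
  z * (besselI ν z * besselKIntegral (ν + 1) z + besselI (ν + 1) z * besselKIntegral ν z)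

section Connection

variable {ν z : ℂ}

lemma besselWronskian_add_one (ν : ℂ) (hz : 0 < z.re) :
    besselWronskian (ν + 1) z = besselWronskian ν z := by
  have hz0 : z ≠ 0 := Complex.ne_zero_of_re_pos hz
  have hK := besselKIntegral_add_one_sub (ν + 1) hz
  rw [add_sub_cancel_right] at hK
  rw [besselWronskian, besselWronskian, besselI_eq_add ν hz0, add_assoc ν 1 1, one_add_one_eq_two]
    at *
  field_simp
  linear_combination besselI (ν + 1) z * hK

lemma tendsto_besselWronskian_nhdsGT_zero (hν : 0 < ν.re) :
    Tendsto (fun x : ℝ => besselWronskian ν x) (nhdsWithin 0 (Ioi 0)) (nhds 1) := by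
  have hν1 : 0 < (ν + 1).re := by simpa using hν.trans (lt_add_one _)
  have hy : Tendsto (fun x : ℝ => ((x : ℂ) / 2) ^ 2) (nhdsWithin 0 (Ioi 0)) (nhds 0) := by
    have hcont : Continuous fun x : ℝ => ((x : ℂ) / 2) ^ 2 := by fun_prop
    simpa using (hcont.tendsto 0).mono_left nhdsWithin_le_nhds
  have hH : ∀ c, Tendsto (fun x : ℝ => hypergeometric01 c (((x : ℂ) / 2) ^ 2))
      (nhdsWithin 0 (Ioi 0)) (nhds (Complex.Gamma c)⁻¹) := fun c =>
    hypergeometric01_zero c ▸ ((continuous_hypergeometric01 c).tendsto 0).comp hy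
  have h := ((hH (ν + 1)).mul (tendsto_two_mul_cpow_mul_besselKIntegral_nhdsGT_zero hν1)).add
    ((hy.mul (hH (ν + 2))).mul (tendsto_two_mul_cpow_mul_besselKIntegral_nhdsGT_zero hν))
  rw [inv_mul_cancel₀ (Complex.Gamma_ne_zero_of_re_pos hν1), zero_mul, zero_mul, add_zero] at h
  refine h.congr' ?_
  filter_upwards [self_mem_nhdsWithin] with x hx
  have hx0 : (x : ℂ) ≠ 0 := Complex.ofReal_ne_zero.2 (ne_of_gt hx)
  rw [besselWronskian, besselI_eq_cpow_mul_hypergeometric01 _ hx0,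
    besselI_eq_cpow_mul_hypergeometric01 _ hx0,
    Complex.cpow_add _ _ (div_ne_zero hx0 two_ne_zero), Complex.cpow_one, add_assoc,
    one_add_one_eq_two]
  ring

lemma besselWronskian_eq_one_of_re_pos (hν : 0 < ν.re) (hz : 0 < z.re) :
    besselWronskian ν z = 1 := by
  have hW : ∀ w ∈ {w : ℂ | 0 < w.re}, HasDerivAt (besselWronskian ν) 0 w := by
    intro w hw
    have hslit : w ∈ Complex.slitPlane := Or.inl hw
    have h := (hasDerivAt_id' w).fun_mul
      (((hasDerivAt_besselI ν hslit).fun_mul (hasDerivAt_besselKIntegral_add_one ν hw)).fun_add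
        ((hasDerivAt_besselI_add_one ν hslit).fun_mul (hasDerivAt_besselKIntegral ν hw)))
    refine h.congr_deriv ?_
    have hw0 : w ≠ 0 := Complex.slitPlane_ne_zero hslit
    field_simp
    ring
  have hconst : ∀ x : ℝ, x ∈ Ioi (0 : ℝ) → besselWronskian ν x = besselWronskian ν z := fun x hx =>
    (isOpen_lt continuous_const Complex.continuous_re).is_const_of_deriv_eq_zero
      (convex_halfSpace_re_gt 0).isPreconnected
      (fun w hw => (hW w hw).differentiableAt.differentiableWithinAt)
      (fun w hw => (hW w hw).deriv) (by simpa using hx) hz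
  exact tendsto_nhds_unique (tendsto_const_nhds.congr' <| by
    filter_upwards [self_mem_nhdsWithin] with x hx using (hconst x hx).symm)
    (tendsto_besselWronskian_nhdsGT_zero hν)

lemma besselWronskian_eq_one (ν : ℂ) (hz : 0 < z.re) : besselWronskian ν z = 1 := by
  obtain ⟨n, hn⟩ := exists_nat_gt (-ν.re)
  induction n generalizing ν with
  | zero => exact besselWronskian_eq_one_of_re_pos (by simpa using hn) hz
  | succ n ih =>
    rw [← besselWronskian_add_one ν hz]
    refine ih (ν + 1) ?_
    push_cast at hn
    rw [Complex.add_re, Complex.one_re]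
    linarith

lemma besselKIntegral_mul_two_mul_sin (ν : ℂ) (hz : 0 < z.re) :
    besselKIntegral ν z * (2 * Complex.sin (ν * π)) = π * (besselI (-ν) z - besselI ν z) := by
  have hz0 : z ≠ 0 := Complex.ne_zero_of_re_pos hz
  have hpi : (π : ℂ) ≠ 0 := Complex.ofReal_ne_zero.2 Real.pi_ne_zero
  have h := besselWronskian_eq_one ν hz
  have hneg := besselWronskian_eq_one (-ν - 1) hz
  rw [besselWronskian] at h
  rw [besselWronskian, sub_add_cancel, besselKIntegral_neg, ← neg_add', besselKIntegral_neg] at hneg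
  have hI := besselI_wronskian ν hz0
  rw [← neg_add', eq_div_iff (mul_ne_zero hpi hz0), mul_comm (π : ℂ) ν] at hI
  linear_combination -besselKIntegral ν z * hI + π * besselI (-ν) z * h - π * besselI ν z * hneg

lemma sin_mul_pi_ne_zero_of_not_int {ν : ℂ} (hν : ¬∃ n : ℤ, ν = n) : Complex.sin (ν * π) ≠ 0 :=
  fun h => hν <| (Complex.sin_eq_zero_iff.1 h).imp fun _ =>
    mul_right_cancel₀ (Complex.ofReal_ne_zero.2 Real.pi_ne_zero)

lemma besselKIntegral_eq_of_sin_ne_zero (hν : Complex.sin (ν * π) ≠ 0) (hz : 0 < z.re) :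
    besselKIntegral ν z =
      π / (2 * Complex.sin (ν * π)) * (besselI (-ν) z - besselI ν z) := by
  rw [div_mul_eq_mul_div, eq_div_iff (mul_ne_zero two_ne_zero hν),
    besselKIntegral_mul_two_mul_sin ν hz]

lemma eventually_sin_mul_pi_ne_zero (n : ℤ) :
    ∀ᶠ μ in nhdsWithin (n : ℂ) {(n : ℂ)}ᶜ, Complex.sin (μ * π) ≠ 0 := by
  have h : HasDerivAt (fun μ : ℂ => Complex.sin (μ * π)) (Complex.cos (n * π) * (1 * π)) n :=
    ((hasDerivAt_id' (n : ℂ)).mul_const (π : ℂ)).csin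
  refine h.eventually_ne ?_
  have hcos : Complex.cos (n * π) ≠ 0 := by
    exact_mod_cast (Real.cos_int_mul_pi n).trans_ne (zpow_ne_zero n (neg_ne_zero.2 one_ne_zero))
  simpa using hcos

theorem besselK_eq_besselKIntegral (ν : ℂ) (hz : 0 < z.re) :
    besselK ν z = besselKIntegral ν z := by
  by_cases hν : ∃ n : ℤ, ν = n
  · rw [besselK, if_pos hν]
    obtain ⟨n, rfl⟩ := hν
    refine (((continuous_besselKIntegral_left hz).tendsto n).mono_left
      nhdsWithin_le_nhds |>.congr' ?_).limUnder_eq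
    filter_upwards [eventually_sin_mul_pi_ne_zero n] with μ hμ
    exact besselKIntegral_eq_of_sin_ne_zero hμ hz
  · rw [besselK, if_neg hν,
      besselKIntegral_eq_of_sin_ne_zero (sin_mul_pi_ne_zero_of_not_int hν) hz]

end Connection

section Laplace

lemma tendsto_mul_cosh_sub_one (v : ℝ) :
    Tendsto (fun x : ℝ => x * (Real.cosh (v / √x) - 1)) atTop (nhds (v ^ 2 / 2)) := by
  -- `cosh w - 1 = 2 sinh² (w / 2)` reduces the limit to the slope of `sinh` at `0`.
  have hsinh : Tendsto (fun r : ℝ => r * Real.sinh (v / 2 * r⁻¹)) atTop (nhds (v / 2)) := by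
    have hderiv : HasDerivAt (fun t : ℝ => Real.sinh (v / 2 * t)) (v / 2) 0 := by
      simpa using ((hasDerivAt_id (0 : ℝ)).const_mul (v / 2)).sinh
    simpa [Function.comp_def] using
      hderiv.tendsto_slope_zero_right.comp tendsto_inv_atTop_nhdsGT_zero
  have h := ((hsinh.pow 2).const_mul 2).comp Real.tendsto_sqrt_atTop
  rw [show 2 * (v / 2) ^ 2 = v ^ 2 / 2 by ring] at h
  refine h.congr' ?_
  filter_upwards [eventually_ge_atTop 0] with x hx
  have hcosh := Real.cosh_two_mul (v / 2 * (√x)⁻¹)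
  rw [show 2 * (v / 2 * (√x)⁻¹) = v / √x by ring, Real.cosh_sq] at hcosh
  rw [hcosh, Function.comp_apply, mul_pow, Real.sq_sqrt hx]
  ring

lemma tendsto_exp_mul_besselKKernel (ν : ℂ) (v : ℝ) :
    Tendsto (fun x : ℝ => Complex.exp x * besselKKernel ν x (v / √x)) atTop
      (nhds (Real.exp (-(1 / 2) * v ^ 2) : ℂ)) := by
  have hsqrt : Tendsto (fun x : ℝ => v / √x) atTop (nhds 0) :=
    Real.tendsto_sqrt_atTop.const_div_atTop v
  have h := (((Complex.continuous_ofReal.tendsto _).comp hsqrt).const_mul ν).sub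
    ((Complex.continuous_ofReal.tendsto _).comp (tendsto_mul_cosh_sub_one v))
  convert h.cexp using 2 with x
  · rw [besselKKernel, ← Complex.exp_add]
    simp only [Function.comp_apply]
    push_cast
    ring_nf
  · push_cast
    ring_nf

lemma norm_exp_mul_besselKKernel_le (ν : ℂ) {x : ℝ} (hx : 1 ≤ x) (v : ℝ) :
    ‖Complex.exp x * besselKKernel ν x (v / √x)‖ ≤
      Real.exp (-(1 / 2) * v ^ 2 + |ν.re| * |v|) := by
  have hx0 : 0 < x := one_pos.trans_le hx
  have hscale : |v / √x| ≤ |v| := by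
    rw [abs_div, abs_of_nonneg (Real.sqrt_nonneg x)]
    exact div_le_self (abs_nonneg v) (Real.one_le_sqrt.2 hx)
  calc ‖Complex.exp x * besselKKernel ν x (v / √x)‖
      ≤ Real.exp x * (Real.exp (-x) * Real.exp (-(x / 2) * (v / √x) ^ 2 + |ν.re| * |v / √x|)) := by
        rw [norm_mul, Complex.norm_exp_ofReal]
        gcongr
        exact norm_besselKKernel_le_gaussian le_rfl hx0.le _
    _ = Real.exp (-(1 / 2) * v ^ 2 + |ν.re| * |v / √x|) := by
        rw [← mul_assoc, ← Real.exp_add, add_neg_cancel, Real.exp_zero, one_mul, div_pow,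
          Real.sq_sqrt hx0.le]
        field_simp
    _ ≤ Real.exp (-(1 / 2) * v ^ 2 + |ν.re| * |v|) := by gcongr

lemma tendsto_integral_exp_mul_besselKKernel (ν : ℂ) :
    Tendsto (fun x : ℝ => ∫ v : ℝ, Complex.exp x * besselKKernel ν x (v / √x)) atTop
      (nhds (√(2 * π) : ℂ)) := by
  have hgauss : ∫ v : ℝ, (Real.exp (-(1 / 2) * v ^ 2) : ℂ) = √(2 * π) := by
    rw [integral_complex_ofReal, integral_gaussian, div_div_eq_mul_div, div_one, mul_comm]
  rw [← hgauss]
  refine tendsto_integral_filter_of_dominated_convergence _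
    (Eventually.of_forall fun x => Continuous.aestronglyMeasurable ?_) ?_
    (integrable_exp_neg_mul_sq_add_mul_abs one_half_pos |ν.re|)
    (ae_of_all _ (tendsto_exp_mul_besselKKernel ν))
  · exact continuous_const.mul ((continuous_besselKKernel ν x).comp (continuous_id.div_const _))
  · filter_upwards [eventually_ge_atTop 1] with x hx
    exact ae_of_all _ (norm_exp_mul_besselKKernel_le ν hx)

lemma integral_exp_mul_besselKKernel (ν : ℂ) (x : ℝ) :
    ∫ v : ℝ, Complex.exp x * besselKKernel ν x (v / √x) =
      2 * √x * Complex.exp x * besselKIntegral ν x := by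
  rw [Measure.integral_comp_div (fun u => Complex.exp x * besselKKernel ν x u) √x,
    abs_of_nonneg (Real.sqrt_nonneg x), integral_const_mul, Complex.real_smul, besselKIntegral]
  ring

end Laplace

/-- For any `ν ∈ ℂ`, `K_ν(x) / ((π/(2x))^{1/2} e^{-x}) → 1` as `x → +∞` over positive reals. -/
theorem besselK_asymptotic (ν : ℂ) :
    Tendsto (fun x : ℝ => besselK ν (x : ℂ) /
        ((Real.sqrt (Real.pi / (2 * x)) : ℂ) * Complex.exp (-(x : ℂ))))
      atTop (nhds 1) := by
  have hpi : (√(2 * π) : ℂ) ≠ 0 := Complex.ofReal_ne_zero.2 (by positivity)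
  have h := (tendsto_integral_exp_mul_besselKKernel ν).div_const (√(2 * π) : ℂ)
  rw [div_self hpi] at h
  refine h.congr' ?_
  filter_upwards [eventually_gt_atTop 0] with x hx
  have hsqrt : √(π / (2 * x)) = √(2 * π) / (2 * √x) := by
    rw [show π / (2 * x) = 2 * π / (2 ^ 2 * x) by field_simp, Real.sqrt_div (by positivity),
      Real.sqrt_mul (by positivity) x, Real.sqrt_sq zero_le_two]
  rw [integral_exp_mul_besselKKernel, besselK_eq_besselKIntegral ν (by simpa using hx), hsqrt,
    Complex.exp_neg]
  have hx0 : (√x : ℂ) ≠ 0 := Complex.ofReal_ne_zero.2 (by positivity)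
  push_cast
  field_simp
end

section
/- For all real x > 0, the modified Bessel function of the second kind of order zero satisfies K₀(x) ≤ 1 + log 2 + |log x|. -/
open Filter Set MeasureTheory
open scoped Real Classical

/-!
Split `K_ν(x) = ½ ∫₀^∞ t^{-ν-1} e^{-z(t+1/t)} dt`, `z = x/2`, at `t = 1`: the substitution
`t ↦ 1/t` turns it into `½ (F(ν) + F(-ν))` with `F(ν) = ∫₁^∞ t^{-ν-1} e^{-z(t+1/t)} dt`. In this
form the identity follows from the power series that define `K_ν`. Expanding `e^{-z/t}` writes
`F(ν)` as a series of exponential integrals of `z`, each of which is a Gamma value times a power of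
`z` plus a power series in `z`. For non-integer `ν` the Gamma values add up to
`-(π / sin νπ) I_ν(x)` by the reflection formula, and what remains is a double series that is odd
in `ν`, as swapping its two indices shows, so it cancels in `F(ν) + F(-ν)`. As `F` is continuous,
the integer orders follow.

At `ν = 0` this gives `K₀(x) = F(0) ≤ ∫₁^∞ e^{-zt} dt/t`. The integrand is at most `1/t` up to
`t = max(1, 1/z)` and at most `z e^{-zt}` beyond, so `K₀(x) ≤ |log z| + 1`.
-/

open scoped Nat Topology
open Complex (integerComplement)

/-! ### Exponential integrals -/

lemma norm_cpow_mul_exp_neg_mul (p : ℂ) (x : ℝ) {t : ℝ} (ht : 0 < t) :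
    ‖(t : ℂ) ^ p * Complex.exp (-(x * t))‖ = t ^ p.re * rexp (-(x * t)) := by
  rw [norm_mul, Complex.norm_cpow_eq_rpow_re_of_pos ht, Complex.norm_exp]
  simp

lemma integrableOn_rpow_mul_exp_neg_mul_Ioi (p : ℝ) {x a : ℝ} (hx : 0 < x) (ha : 0 < a) :
    IntegrableOn (fun t : ℝ => t ^ p * rexp (-(x * t))) (Ioi a) := by
  refine integrable_of_isBigO_exp_neg (half_pos hx) ?_ ?_
  · exact fun t ht => ((Real.continuousAt_rpow_const t p (.inl (ha.trans_le ht).ne')).mul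
      (by fun_prop)).continuousWithinAt
  · -- half of the exponential decay absorbs the power
    have h := (isLittleO_exp_neg_mul_rpow_atTop (half_pos hx) (-p)).isBigO
    have hp : (fun t : ℝ => t ^ p * rexp (-(x / 2) * t)) =O[atTop] fun _ => (1 : ℝ) := by
      refine ((Asymptotics.isBigO_refl (fun t : ℝ => t ^ p) atTop).mul h).congr' .rfl ?_
      filter_upwards [eventually_gt_atTop 0] with t ht
      rw [← Real.rpow_add ht, add_neg_cancel, Real.rpow_zero]
    refine (hp.mul (Asymptotics.isBigO_refl (fun t => rexp (-(x / 2) * t)) atTop)).congr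
      (fun t => ?_) fun t => one_mul _
    rw [mul_assoc, ← Real.exp_add]
    ring_nf

lemma integrableOn_cpow_mul_exp_neg_mul_Ioi (p : ℂ) {x a : ℝ} (hx : 0 < x) (ha : 0 < a) :
    IntegrableOn (fun t : ℝ => (t : ℂ) ^ p * Complex.exp (-(x * t))) (Ioi a) := by
  refine (integrableOn_rpow_mul_exp_neg_mul_Ioi p.re hx ha).mono' (by fun_prop) ?_
  filter_upwards [ae_restrict_mem measurableSet_Ioi] with t ht
  exact (norm_cpow_mul_exp_neg_mul p x (ha.trans ht)).le

/-- The generalized exponential integral `E_p(x) = ∫₁^∞ t^{-p} e^{-xt} dt`. -/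
noncomputable def expIntegral (p : ℂ) (x : ℝ) : ℂ :=
  ∫ t in Ioi (1 : ℝ), (t : ℂ) ^ (-p) * Complex.exp (-(x * t))

lemma expIntegral_recurrence (p : ℂ) {x : ℝ} (hx : 0 < x) :
    p * expIntegral (p + 1) x + x * expIntegral p x = Complex.exp (-x) := by
  have hint (q : ℂ) := integrableOn_cpow_mul_exp_neg_mul_Ioi q hx one_pos
  have hderiv (t : ℝ) (ht : t ∈ Ici (1 : ℝ)) :
      HasDerivAt (fun t : ℝ => (t : ℂ) ^ (-p) * Complex.exp (-(x * t)))
        (-p * ((t : ℂ) ^ (-(p + 1)) * Complex.exp (-(x * t)))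
          - x * ((t : ℂ) ^ (-p) * Complex.exp (-(x * t)))) t := by
    have ht0 : (t : ℂ) ∈ Complex.slitPlane :=
      Complex.ofReal_mem_slitPlane.mpr (one_pos.trans_le ht)
    have hexp := ((hasDerivAt_id (t : ℂ)).const_mul (x : ℂ)).neg.cexp
    refine (((hasDerivAt_id (t : ℂ)).cpow_const ht0).mul hexp).comp_ofReal.congr_deriv ?_
    simp only [id, Pi.neg_apply, neg_add']
    ring
  have hderivInt := ((hint (-(p + 1))).const_mul (-p)).sub ((hint (-p)).const_mul (x : ℂ))
  have h := integral_Ioi_of_hasDerivAt_of_tendsto' hderiv hderivInt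
    (tendsto_zero_of_hasDerivAt_of_integrableOn_Ioi
      (fun t ht => hderiv t (mem_Ici_of_Ioi ht)) hderivInt (hint (-p)))
  rw [integral_sub ((hint _).const_mul _) ((hint _).const_mul _), integral_const_mul,
    integral_const_mul] at h
  simp only [Complex.ofReal_one, Complex.one_cpow, mul_one, one_mul, zero_sub] at h
  simp only [expIntegral]
  linear_combination -h

lemma hasSum_cexp (z : ℂ) : HasSum (fun k : ℕ => z ^ k / (k ! : ℂ)) (Complex.exp z) := by
  rw [Complex.exp_eq_exp_ℂ]
  exact NormedSpace.expSeries_div_hasSum_exp z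

lemma hasSum_integral_cpow_mul_exp_neg_mul {a : ℂ} (ha : 0 < a.re) (x : ℝ) :
    HasSum (fun k : ℕ => (-x : ℂ) ^ k / (k ! * (a + k)))
      (∫ t in (0 : ℝ)..1, (t : ℂ) ^ (a - 1) * Complex.exp (-(x * t))) := by
  have hterm (k : ℕ) : ∫ t in (0 : ℝ)..1, (-x : ℂ) ^ k / k ! * (t : ℂ) ^ (a + k - 1)
      = (-x : ℂ) ^ k / (k ! * (a + k)) := by
    have hre : 0 < (a + k).re := by simpa using add_pos_of_pos_of_nonneg ha k.cast_nonneg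
    have hne : a + k ≠ 0 := fun h => by simp [h] at hre
    rw [intervalIntegral.integral_const_mul, integral_cpow (.inl (by simpa using hre))]
    simp [hne, div_eq_mul_inv, mul_assoc, mul_comm]
  simp_rw [← hterm]
  have hrpow : IntervalIntegrable (fun t : ℝ => t ^ (a.re - 1)) volume 0 1 :=
    intervalIntegral.intervalIntegrable_rpow' (by linarith)
  refine intervalIntegral.hasSum_integral_of_dominated_convergence
    (fun k t => |x| ^ k / k ! * t ^ (a.re - 1))
    (fun k => (Measurable.const_mul (by fun_prop) _).aestronglyMeasurable) (fun k => ?_) ?_ ?_ ?_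
  · refine ae_of_all _ fun t ht => ?_
    rw [uIoc_of_le zero_le_one] at ht
    rw [norm_mul, Complex.norm_cpow_eq_rpow_re_of_pos ht.1]
    simp only [norm_div, norm_pow, norm_neg, Complex.norm_real, Real.norm_eq_abs,
      Complex.norm_natCast]
    refine mul_le_mul_of_nonneg_left ?_ (by positivity)
    exact Real.rpow_le_rpow_of_exponent_ge ht.1 ht.2 (by simp)
  · exact ae_of_all _ fun t _ => (Real.summable_pow_div_factorial |x|).mul_right _
  · simp_rw [tsum_mul_right]
    exact hrpow.const_mul _
  · refine ae_of_all _ fun t ht => ?_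
    rw [uIoc_of_le zero_le_one] at ht
    have ht0 : (t : ℂ) ≠ 0 := by exact_mod_cast ht.1.ne'
    refine ((hasSum_cexp (-(x * t))).mul_left ((t : ℂ) ^ (a - 1))).congr_fun fun k => ?_
    rw [add_sub_right_comm, Complex.cpow_add _ _ ht0, Complex.cpow_natCast, ← neg_mul, mul_pow]
    ring

lemma hasSum_Gamma_sub_expIntegral_of_re_pos {a : ℂ} (ha : 0 < a.re) {x : ℝ} (hx : 0 < x) :
    HasSum (fun k : ℕ => (-x : ℂ) ^ k / (k ! * (a + k)))
      ((x : ℂ) ^ (-a) * Complex.Gamma a - expIntegral (1 - a) x) := by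
  -- both sides are `∫₀¹ t^(a-1) e^(-xt) dt`
  convert! hasSum_integral_cpow_mul_exp_neg_mul ha x using 1
  have hx' : (x : ℂ).arg ≠ π := by
    rw [Complex.arg_ofReal_of_nonneg hx.le]
    exact Real.pi_ne_zero.symm
  have hGamma := Complex.integral_cpow_mul_exp_neg_mul_Ioi ha hx
  rw [one_div, Complex.inv_cpow _ _ hx', ← Complex.cpow_neg] at hGamma
  have hIoi := integrableOn_cpow_mul_exp_neg_mul_Ioi (a - 1) hx one_pos
  have hI : IntervalIntegrable (fun t : ℝ => (t : ℂ) ^ (a - 1) * Complex.exp (-(x * t)))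
      volume 0 1 :=
    (intervalIntegral.intervalIntegrable_cpow' (by simpa using ha)).mul_continuousOn (by fun_prop)
  rw [← hGamma, ← intervalIntegral.integral_interval_add_Ioi' hI hIoi, expIntegral, neg_sub,
    add_sub_cancel_right]

/-- One step of the analytic continuation in `a`, by `a / (a + k) = 1 - k / (a + k)`. -/
lemma hasSum_Gamma_sub_expIntegral_of_add_one {a : ℂ} (ha : ∀ k : ℕ, a ≠ -k) {x : ℝ} (hx : 0 < x)
    (h : HasSum (fun k : ℕ => (-x : ℂ) ^ k / (k ! * (a + 1 + k)))
      ((x : ℂ) ^ (-(a + 1)) * Complex.Gamma (a + 1) - expIntegral (1 - (a + 1)) x)) :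
    HasSum (fun k : ℕ => (-x : ℂ) ^ k / (k ! * (a + k)))
      ((x : ℂ) ^ (-a) * Complex.Gamma a - expIntegral (1 - a) x) := by
  have ha0 : a ≠ 0 := by simpa using ha 0
  have hx0 : (x : ℂ) ≠ 0 := by exact_mod_cast hx.ne'
  have hshift : HasSum (fun k : ℕ => k * ((-x : ℂ) ^ k / (k ! * (a + k)))) _ :=
    HasSum.zero_add ((h.mul_left (-x : ℂ)).congr_fun fun k => by
      push_cast [Nat.factorial_succ, pow_succ]
      rw [show a + ((k : ℂ) + 1) = a + 1 + k by ring]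
      field_simp [Nat.cast_add_one_ne_zero (R := ℂ) k])
  have hrec := expIntegral_recurrence (-a) hx
  rw [← hasSum_mul_left_iff ha0]
  convert! (hasSum_cexp (-x)).sub hshift using 1
  · ext k
    have : a + k ≠ 0 := fun h => ha k (eq_neg_of_add_eq_zero_left h)
    field_simp
    ring
  · rw [Complex.Gamma_add_one a ha0, neg_add, Complex.cpow_add _ _ hx0, Complex.cpow_neg_one,
      ← hrec, sub_add_cancel_right, neg_add_eq_sub]
    field_simp
    simp only [Nat.factorial_zero, Nat.cast_one, Nat.cast_zero, zero_div, zero_add, mul_one,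
      one_mul]
    ring

lemma hasSum_Gamma_sub_expIntegral {a : ℂ} (ha : ∀ k : ℕ, a ≠ -k) {x : ℝ} (hx : 0 < x) :
    HasSum (fun k : ℕ => (-x : ℂ) ^ k / (k ! * (a + k)))
      ((x : ℂ) ^ (-a) * Complex.Gamma a - expIntegral (1 - a) x) := by
  obtain ⟨N, hN⟩ := exists_nat_gt (-a.re)
  induction N generalizing a with
  | zero => exact hasSum_Gamma_sub_expIntegral_of_re_pos (by simpa using hN) hx
  | succ N ih =>
    refine hasSum_Gamma_sub_expIntegral_of_add_one ha hx (ih (fun k hk => ha (k + 1) ?_) ?_)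
    · push_cast
      linear_combination hk
    · push_cast at hN
      simp only [Complex.add_re, Complex.one_re]
      linarith

/-! ### The incomplete Bessel function -/

/-- The incomplete Bessel function `K_ν(x, y) = ∫₁^∞ t^{-ν-1} e^{-xt-y/t} dt`, which is the part
`t > 1` of the integral over `(0, ∞)` that represents a modified Bessel function of the second
kind. -/
noncomputable def incompleteBesselK (ν : ℂ) (x y : ℝ) : ℂ :=
  ∫ t in Ioi (1 : ℝ), (t : ℂ) ^ (-ν - 1) * Complex.exp (-(x * t) - y / t)

lemma hasSum_incompleteBesselK (ν : ℂ) {x : ℝ} (hx : 0 < x) (y : ℝ) :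
    HasSum (fun n : ℕ => (-y : ℂ) ^ n / n ! * expIntegral (ν + n + 1) x)
      (incompleteBesselK ν x y) := by
  simp_rw [expIntegral, ← integral_const_mul]
  refine hasSum_integral_of_dominated_convergence
    (fun n t => |y| ^ n / n ! * (t ^ (-ν - 1).re * rexp (-(x * t))))
    (fun n => (Measurable.const_mul (by fun_prop) _).aestronglyMeasurable) (fun n => ?_) ?_ ?_ ?_
  · filter_upwards [ae_restrict_mem measurableSet_Ioi] with t (ht : 1 < t)
    rw [norm_mul, norm_cpow_mul_exp_neg_mul _ _ (one_pos.trans ht)]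
    simp only [norm_div, norm_pow, norm_neg, Complex.norm_real, Real.norm_eq_abs,
      Complex.norm_natCast]
    refine mul_le_mul_of_nonneg_left (mul_le_mul_of_nonneg_right
      (Real.rpow_le_rpow_of_exponent_le ht.le ?_) (by positivity)) (by positivity)
    simp [neg_add_eq_sub]
  · exact ae_of_all _ fun t => (Real.summable_pow_div_factorial |y|).mul_right _
  · simp_rw [tsum_mul_right]
    exact (integrableOn_rpow_mul_exp_neg_mul_Ioi _ hx one_pos).const_mul _
  · filter_upwards [ae_restrict_mem measurableSet_Ioi] with t (ht : 1 < t)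
    have ht0 : (t : ℂ) ≠ 0 := by exact_mod_cast (one_pos.trans ht).ne'
    rw [sub_eq_add_neg (-(x * t : ℂ)), Complex.exp_add, ← mul_assoc]
    refine ((hasSum_cexp (-(y / t))).mul_left _).congr_fun fun n => ?_
    rw [show -(ν + n + 1) = -ν - 1 - n by ring, Complex.cpow_sub _ _ ht0, Complex.cpow_natCast,
      ← neg_div, div_pow]
    ring

lemma continuous_incompleteBesselK {x : ℝ} (hx : 0 < x) (y : ℝ) :
    Continuous fun ν => incompleteBesselK ν x y := by
  refine continuous_iff_continuousAt.mpr fun ν₀ => ?_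
  refine continuousAt_of_dominated
    (bound := fun t => t ^ (-ν₀.re) * rexp (-(x * t)) * rexp |y|)
    (.of_forall fun ν => by fun_prop) ?_
    ((integrableOn_rpow_mul_exp_neg_mul_Ioi _ hx one_pos).mul_const _) ?_
  · filter_upwards [Complex.continuous_re.continuousAt.eventually (lt_mem_nhds (sub_one_lt ν₀.re))]
      with ν (hν : ν₀.re - 1 < ν.re)
    filter_upwards [ae_restrict_mem measurableSet_Ioi] with t (ht : 1 < t)
    have hre : (-ν - 1).re ≤ -ν₀.re := by
      simp only [Complex.sub_re, Complex.neg_re, Complex.one_re]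
      linarith
    have hyt : ‖Complex.exp (-(y / t))‖ ≤ rexp |y| := by
      rw [Complex.norm_exp, ← Complex.ofReal_div, ← Complex.ofReal_neg, Complex.ofReal_re]
      refine Real.exp_le_exp.mpr ((neg_le_abs _).trans ?_)
      rw [abs_div, abs_of_pos (one_pos.trans ht)]
      exact div_le_self (abs_nonneg y) ht.le
    rw [sub_eq_add_neg (-(x * t : ℂ)), Complex.exp_add, ← mul_assoc, norm_mul,
      norm_cpow_mul_exp_neg_mul _ _ (one_pos.trans ht)]
    gcongr
    exact ht.le
  · filter_upwards [ae_restrict_mem measurableSet_Ioi] with t (ht : 1 < t)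
    have : NeZero (t : ℂ) := ⟨by exact_mod_cast (one_pos.trans ht).ne'⟩
    fun_prop

/-- The double series `∑ₘ ∑ₙ (-z)^(m+n) / (m! n! (n - m - ν))`: up to sign, what remains of
`incompleteBesselK ν z z` when its multiple of `besselI ν (2 * z)` is removed. The terms are
grouped as the product of a term of `e^{-z}` and a term of the series in
`hasSum_Gamma_sub_expIntegral`. -/
noncomputable def crossSeries (ν z : ℂ) : ℂ :=
  ∑' q : ℕ × ℕ, (-z) ^ q.1 / q.1 ! * ((-z) ^ q.2 / (q.2 ! * (-ν - q.1 + q.2)))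

lemma exists_pos_le_norm_add_intCast {ν : ℂ} (hν : ν ∈ integerComplement) :
    ∃ δ > 0, ∀ n : ℤ, δ ≤ ‖ν + n‖ := by
  refine ⟨Metric.infDist ν (range Int.cast), ?_, fun n => ?_⟩
  · exact (Complex.isClosed_range_intCast.notMem_iff_infDist_pos (range_nonempty _)).mp hν
  · simpa [dist_eq_norm] using Metric.infDist_le_dist_of_mem (x := ν)
      (s := range ((↑) : ℤ → ℂ)) (mem_range_self (-n))

lemma neg_mem_integerComplement {ν : ℂ} (hν : ν ∈ integerComplement) :
    -ν ∈ integerComplement := by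
  rintro ⟨n, hn⟩
  exact hν ⟨-n, by simp [hn]⟩

lemma summable_crossSeries {ν : ℂ} (hν : ν ∈ integerComplement) (z : ℂ) :
    Summable fun q : ℕ × ℕ =>
      (-z) ^ q.1 / q.1 ! * ((-z) ^ q.2 / (q.2 ! * (-ν - q.1 + q.2))) := by
  obtain ⟨δ, hδ, hle⟩ := exists_pos_le_norm_add_intCast (neg_mem_integerComplement hν)
  have hexp := Real.summable_pow_div_factorial ‖z‖
  refine .of_norm_bounded
    ((hexp.mul_of_nonneg hexp (fun _ => by positivity) (fun _ => by positivity)).mul_left δ⁻¹)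
    fun ⟨m, n⟩ => ?_
  have hmn : δ ≤ ‖-ν - m + n‖ := by
    convert hle (n - m) using 2
    push_cast
    ring
  simp only [norm_mul, norm_div, norm_pow, norm_neg, Complex.norm_natCast]
  calc ‖z‖ ^ m / m ! * (‖z‖ ^ n / (n ! * ‖-ν - m + n‖))
      ≤ ‖z‖ ^ m / m ! * (‖z‖ ^ n / (n ! * δ)) := by gcongr
    _ = δ⁻¹ * (‖z‖ ^ m / m ! * (‖z‖ ^ n / n !)) := by field_simp

lemma crossSeries_neg (ν z : ℂ) : crossSeries (-ν) z = -crossSeries ν z := by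
  rw [crossSeries, crossSeries, ← (Equiv.prodComm ℕ ℕ).tsum_eq, ← tsum_neg]
  refine tsum_congr fun ⟨m, n⟩ => ?_
  have hmn : -(-ν) - (n : ℂ) + m = -(-ν - m + n) := by ring
  simp only [Equiv.prodComm_apply, Prod.swap_prod_mk, hmn, mul_neg, div_neg]
  generalize -ν - (m : ℂ) + n = c
  ring

lemma sin_mul_pi_ne_zero {ν : ℂ} (hν : ν ∈ integerComplement) : Complex.sin (ν * π) ≠ 0 := by
  rw [mul_comm]
  exact sin_pi_mul_ne_zero hν

lemma neg_one_pow_mul_Gamma_neg_sub_natCast {ν : ℂ} (hν : ν ∈ integerComplement) (n : ℕ) :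
    (-1) ^ n * Complex.Gamma (-ν - n) =
      -(π / Complex.sin (ν * π)) * (Complex.Gamma (n + ν + 1))⁻¹ := by
  have hne : Complex.Gamma (n + ν + 1) ≠ 0 := by
    refine Complex.Gamma_ne_zero fun m hm => hν ⟨-(n + 1 + m), ?_⟩
    push_cast
    linear_combination -hm
  have hsin : Complex.sin (π * (-ν - n)) = -((-1) ^ n * Complex.sin (ν * π)) := by
    rw [← Complex.sin_antiperiodic.add_nat_mul_eq, ← Complex.sin_neg]
    ring_nf
  have hrefl := Complex.Gamma_mul_Gamma_one_sub (-ν - n)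
  rw [hsin, show 1 - (-ν - n) = n + ν + 1 by ring, ← eq_div_iff hne] at hrefl
  rw [hrefl]
  field_simp [sin_mul_pi_ne_zero hν]

lemma hasSum_crossSeries_add_incompleteBesselK {ν : ℂ} (hν : ν ∈ integerComplement) {x : ℝ}
    (hx : 0 < x) :
    HasSum (fun m : ℕ => (-(x / 2 : ℝ) : ℂ) ^ m / m ! *
        (((x / 2 : ℝ) : ℂ) ^ (ν + m) * Complex.Gamma (-ν - m)))
      (crossSeries ν (x / 2 : ℝ) + incompleteBesselK ν (x / 2) (x / 2)) := by
  have hne (m k : ℕ) : -ν - m ≠ -k := fun h => hν ⟨k - m, by push_cast; linear_combination h⟩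
  -- the exponential integrals cancel between the two series
  have hrow (m : ℕ) := (hasSum_Gamma_sub_expIntegral (hne m) (half_pos hx)).mul_left
    ((-(x / 2 : ℝ) : ℂ) ^ m / m !)
  have hcross := (summable_crossSeries hν (x / 2 : ℝ)).hasSum.prod_fiberwise hrow
  refine (hcross.add (hasSum_incompleteBesselK ν (half_pos hx) (x / 2))).congr_fun fun m => ?_
  rw [show 1 - (-ν - m) = ν + m + 1 by ring, show -(-ν - m) = ν + m by ring]
  ring

lemma incompleteBesselK_self {ν : ℂ} (hν : ν ∈ integerComplement) {x : ℝ} (hx : 0 < x) :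
    incompleteBesselK ν (x / 2) (x / 2) =
      -(π / Complex.sin (ν * π)) * besselI ν x - crossSeries ν (x / 2 : ℝ) := by
  have hx0 : (x / 2 : ℂ) ≠ 0 := by exact_mod_cast (half_pos hx).ne'
  rw [eq_sub_iff_add_eq', ← (hasSum_crossSeries_add_incompleteBesselK hν hx).tsum_eq, besselI,
    ← tsum_mul_left]
  refine tsum_congr fun m => ?_
  have hGamma := neg_one_pow_mul_Gamma_neg_sub_natCast hν m
  rw [two_mul, ← add_assoc, Complex.cpow_add _ (m : ℂ) hx0, Complex.cpow_natCast, neg_pow]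
  push_cast
  linear_combination (x / 2) ^ m * (x / 2 : ℂ) ^ (ν + m) / m ! * hGamma

lemma besselI_neg_sub_besselI_eq_incompleteBesselK {ν : ℂ} (hν : ν ∈ integerComplement) {x : ℝ}
    (hx : 0 < x) :
    π / (2 * Complex.sin (ν * π)) * (besselI (-ν) x - besselI ν x) =
      (incompleteBesselK ν (x / 2) (x / 2) + incompleteBesselK (-ν) (x / 2) (x / 2)) / 2 := by
  rw [incompleteBesselK_self hν hx, incompleteBesselK_self (neg_mem_integerComplement hν) hx,
    crossSeries_neg, neg_mul ν, Complex.sin_neg, div_neg]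
  field_simp [sin_mul_pi_ne_zero hν]
  ring

lemma eventually_mem_integerComplement (n : ℤ) :
    ∀ᶠ μ in 𝓝[≠] (n : ℂ), μ ∈ integerComplement := by
  filter_upwards [inter_mem_nhdsWithin _ (Metric.ball_mem_nhds (n : ℂ) one_pos)]
  rintro _ ⟨hne, hball⟩ ⟨k, rfl⟩
  rw [Metric.mem_ball, dist_eq_norm, ← Int.cast_sub, Complex.norm_intCast] at hball
  refine hne ?_
  have h : |k - n| < 1 := by exact_mod_cast hball
  rw [mem_singleton_iff, sub_eq_zero.mp (Int.abs_lt_one_iff.mp h)]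

lemma besselK_eq_incompleteBesselK (ν : ℂ) {x : ℝ} (hx : 0 < x) :
    besselK ν x =
      (incompleteBesselK ν (x / 2) (x / 2) + incompleteBesselK (-ν) (x / 2) (x / 2)) / 2 := by
  unfold besselK
  split_ifs with hν
  · obtain ⟨n, rfl⟩ := hν
    have hcont := continuous_incompleteBesselK (half_pos hx) (x / 2)
    have hlim := ((hcont.add (hcont.comp continuous_neg)).div_const 2).tendsto (n : ℂ)
    refine Tendsto.limUnder_eq ((hlim.mono_left nhdsWithin_le_nhds).congr' ?_)
    filter_upwards [eventually_mem_integerComplement n] with μ hμ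
    exact (besselI_neg_sub_besselI_eq_incompleteBesselK hμ hx).symm
  · exact besselI_neg_sub_besselI_eq_incompleteBesselK (fun ⟨n, hn⟩ => hν ⟨n, hn.symm⟩) hx

/-! ### Order zero -/

lemma incompleteBesselK_zero_eq_ofReal (x y : ℝ) :
    incompleteBesselK 0 x y = ((∫ t in Ioi (1 : ℝ), t⁻¹ * rexp (-(x * t) - y / t) : ℝ) : ℂ) := by
  rw [incompleteBesselK, ← integral_complex_ofReal]
  congr with t
  push_cast
  rw [neg_zero, zero_sub, Complex.cpow_neg_one]

lemma integrableOn_inv_mul_exp_neg_mul_Ioi {x a : ℝ} (hx : 0 < x) (ha : 0 < a) :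
    IntegrableOn (fun t : ℝ => t⁻¹ * rexp (-(x * t))) (Ioi a) := by
  simpa only [Real.rpow_neg_one] using integrableOn_rpow_mul_exp_neg_mul_Ioi (-1) hx ha

lemma integral_Ioi_inv_mul_exp_neg_mul_le_one {x c : ℝ} (hx : 0 < x) (hc : x⁻¹ ≤ c) :
    ∫ t in Ioi c, t⁻¹ * rexp (-(x * t)) ≤ 1 := by
  have hc0 : 0 < c := (inv_pos.mpr hx).trans_le hc
  have hexp : IntegrableOn (fun t => rexp (-x * t)) (Ioi c) :=
    integrableOn_exp_mul_Ioi (neg_lt_zero.mpr hx) c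
  calc ∫ t in Ioi c, t⁻¹ * rexp (-(x * t))
      ≤ ∫ t in Ioi c, x * rexp (-x * t) := by
        refine setIntegral_mono_on (integrableOn_inv_mul_exp_neg_mul_Ioi hx hc0)
          (hexp.const_mul x) measurableSet_Ioi fun t (ht : c < t) => ?_
        rw [neg_mul]
        gcongr
        exact inv_le_of_inv_le₀ hx (hc.trans ht.le)
    _ = rexp (-x * c) := by
        rw [integral_const_mul, integral_exp_mul_Ioi (neg_lt_zero.mpr hx)]
        field_simp
    _ ≤ 1 := by
        rw [Real.exp_le_one_iff, neg_mul]
        exact neg_nonpos.mpr (mul_pos hx hc0).le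

lemma intervalIntegral_inv_mul_exp_neg_mul_le_log {x c : ℝ} (hx : 0 ≤ x) (hc : 1 ≤ c) :
    ∫ t in (1 : ℝ)..c, t⁻¹ * rexp (-(x * t)) ≤ Real.log c := by
  have hpos {t : ℝ} (ht : t ∈ Icc 1 c) : 0 < t := one_pos.trans_le ht.1
  have hinv : ContinuousOn (fun t : ℝ => t⁻¹) (Icc 1 c) :=
    continuousOn_inv₀.mono fun t ht => (hpos ht).ne'
  calc ∫ t in (1 : ℝ)..c, t⁻¹ * rexp (-(x * t))
      ≤ ∫ t in (1 : ℝ)..c, t⁻¹ := by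
        refine intervalIntegral.integral_mono_on hc
          ((hinv.mul (by fun_prop)).intervalIntegrable_of_Icc hc)
          (hinv.intervalIntegrable_of_Icc hc) fun t ht => ?_
        refine mul_le_of_le_one_right (inv_nonneg.mpr (hpos ht).le) ?_
        rw [Real.exp_le_one_iff, neg_nonpos]
        exact mul_nonneg hx (hpos ht).le
    _ = Real.log c := by
        rw [integral_inv_of_pos one_pos (one_pos.trans_le hc), div_one]

lemma integral_Ioi_one_inv_mul_exp_neg_mul_le {x : ℝ} (hx : 0 < x) :
    ∫ t in Ioi (1 : ℝ), t⁻¹ * rexp (-(x * t)) ≤ 1 + |Real.log x| := by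
  have hint := integrableOn_inv_mul_exp_neg_mul_Ioi hx one_pos
  have hc : 1 ≤ max 1 x⁻¹ := le_max_left _ _
  have hlog : Real.log (max 1 x⁻¹) ≤ |Real.log x| := by
    rcases max_choice 1 x⁻¹ with h | h
    · simp [h]
    · rw [h, Real.log_inv]
      exact neg_le_abs _
  rw [← intervalIntegral.integral_interval_add_Ioi hint (hint.mono_set (Ioi_subset_Ioi hc))]
  linarith [intervalIntegral_inv_mul_exp_neg_mul_le_log hx.le hc,
    integral_Ioi_inv_mul_exp_neg_mul_le_one hx (le_max_right 1 x⁻¹)]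

lemma integral_Ioi_one_inv_mul_exp_neg_mul_sub_div_le {x y : ℝ} (hx : 0 < x) (hy : 0 ≤ y) :
    ∫ t in Ioi (1 : ℝ), t⁻¹ * rexp (-(x * t) - y / t) ≤ 1 + |Real.log x| := by
  refine le_trans ?_ (integral_Ioi_one_inv_mul_exp_neg_mul_le hx)
  refine integral_mono_of_nonneg ?_ (integrableOn_inv_mul_exp_neg_mul_Ioi hx one_pos) ?_
  · filter_upwards [ae_restrict_mem measurableSet_Ioi] with t (ht : 1 < t)
    positivity
  · filter_upwards [ae_restrict_mem measurableSet_Ioi] with t (ht : 1 < t)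
    gcongr
    exact sub_le_self _ (by positivity)

/-- For all real `x > 0`, `K₀(x)` is real with `K₀(x) ≤ 1 + log 2 + |log x|`. -/
theorem besselK_zero_log_bound (x : ℝ) (hx : 0 < x) :
    (besselK 0 (x : ℂ)).im = 0 ∧
    (besselK 0 (x : ℂ)).re ≤ 1 + Real.log 2 + |Real.log x| := by
  have hK : besselK 0 x =
      ((∫ t in Ioi (1 : ℝ), t⁻¹ * rexp (-(x / 2 * t) - x / 2 / t) : ℝ) : ℂ) := by
    rw [besselK_eq_incompleteBesselK 0 hx, neg_zero, add_self_div_two,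
      incompleteBesselK_zero_eq_ofReal]
  have hlog : |Real.log (x / 2)| ≤ |Real.log x| + Real.log 2 := by
    rw [Real.log_div hx.ne' two_ne_zero]
    exact (abs_sub _ _).trans_eq (by rw [abs_of_pos (Real.log_pos one_lt_two)])
  have hbound :=
    integral_Ioi_one_inv_mul_exp_neg_mul_sub_div_le (half_pos hx) (half_pos hx).le
  rw [hK, Complex.ofReal_im, Complex.ofReal_re]
  exact ⟨rfl, by linarith⟩
end

section
/- For s ∈ (0,3), the function f_s(x,t) = (x⁴ + t²)^{−s/4} on ℝ² is locally integrable and bounded outside the unit ball, and the map φ ↦ ∫_{ℝ²} φ f_s defines a tempered distribution on ℝ². Moreover, if s ∈ (1,3), then there exist a locally integrable function g : ℝ² → ℝ and a constant C_s > 0 depending only on s such that: (i) for every Schwartz function φ on ℝ², ∫_{ℝ²} φ̂(x,t) f_s(x,t) dx dt = ∫_{ℝ²} φ(ξ) g(ξ) dξ (i.e. g represents the distributional Fourier transform of f_s), and (ii) 0 < g(ξ₁, ξ₂) ≤ C_s f_{3−s}(ξ₁, ξ₂) for all (ξ₁, ξ₂) with ξ₂ ≠ 0. -/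
open Filter Set MeasureTheory
open scoped Real SchwartzMap

/-- The Korányi kernel `f_s(x,t) = (x⁴ + t²)^{-s/4}` on `ℝ²`. -/
noncomputable def koranyiKernel (s : ℝ) (p : ℝ × ℝ) : ℝ :=
  (p.1 ^ 4 + p.2 ^ 2) ^ (-(s / 4))

/-- The Euclidean Fourier transform on `ℝ²`:
`φ̂(ξ) = ∫ e^{-2πi⟨p,ξ⟩} φ(p) dp`. -/
noncomputable def fourier2 (φ : (ℝ × ℝ) → ℂ) (ξ : ℝ × ℝ) : ℂ :=
  ∫ p : ℝ × ℝ,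
    Complex.exp (-2 * (Real.pi : ℂ) * Complex.I * ((p.1 : ℂ) * (ξ.1 : ℂ) + (p.2 : ℂ) * (ξ.2 : ℂ)))
      * φ p

/-!
Let `α = s/4` and `0 < s < 3`. Euler's integrals for `(b + it)^{-α}` and `(b - it)^{-α}`, multiplied
and rewritten in the coordinates `(τ, v)` of the cone `|τ| < v`, give for `b > 0`

  `c (b² + t²)^{-α} = ∫_{|τ| < v} (v² - τ²)^{α-1} e^{-2πvb} e^{2πitτ} dτ dv`,
  `c = π^{-2α} Γ(α)² / 2`

(`integral_coneDensity_mul_cexp`). For `b = x²` the left side is `c f_s(x,t)`, and on the right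
`e^{-2πvx²}` is the Fourier transform of the Gaussian `(2v)^{-1/2} e^{-πξ²/(2v)}`. Hence `c f̂_s`
should be

  `coneFourier α (ξ,τ) = ∫_{v > |τ|} (v² - τ²)^{α-1} (2v)^{-1/2} e^{-πξ²/(2v)} dv`,

which is positive for `τ ≠ 0`. The substitution `v = |τ|/y` turns it into
`2^{-1/2} |τ|^{-β} H(πξ²/(2|τ|))` with `β = (3-s)/2`, where `H` is the Laplace transform of the Beta
weight `y^{β-1} (1 - y²)^{α-1}` on `(0,1)`. The decay `H(c) = O((1 + c)^{-β})` is the bound by a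
multiple of `f_{3-s}`, which also yields local integrability.

The identity `∫ φ̂ f_s = ∫ φ g` is proved with `b = x² + ε`, where the cone integral converges
absolutely, uniformly in `x`, so that Fubini applies; dominated convergence as `ε → 0` removes the
regularization.

The kernel is tempered because `x⁴ + t² ≥ |x|^{4/3} |t|^{4/3}`, whence
`f_s(x,t) ≤ |x|^{-s/3} |t|^{-s/3}` with `s/3 < 1`.
-/

open scoped Topology

/-! ### Integration against Schwartz functions -/

theorem norm_smul_schwartz_le {E F : Type*} [NormedAddCommGroup E] [NormedSpace ℝ E]
    [NormedAddCommGroup F] [NormedSpace ℝ F] (k : ℕ) (φ : 𝓢(E, F)) (a : ℝ) (x : E) :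
    ‖a • φ x‖ ≤ 2 ^ k * (Finset.Iic (k, 0)).sup (schwartzSeminormFamily ℝ E F) φ
      * ‖((1 + ‖x‖) ^ k)⁻¹ * a‖ := by
  have h : (1 + ‖x‖) ^ k * ‖φ x‖ ≤
      2 ^ k * (Finset.Iic (k, 0)).sup (schwartzSeminormFamily ℝ E F) φ := by
    rw [← norm_iteratedFDeriv_zero (𝕜 := ℝ)]
    exact SchwartzMap.one_add_le_sup_seminorm_apply (m := (k, 0)) le_rfl le_rfl φ x
  rw [norm_smul, norm_mul, Real.norm_of_nonneg (by positivity : 0 ≤ ((1 + ‖x‖) ^ k)⁻¹),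
    ← mul_assoc, mul_comm]
  gcongr
  rwa [← div_eq_mul_inv, le_div_iff₀' (by positivity)]

section Tempered

variable {E F : Type*} [NormedAddCommGroup E] [MeasurableSpace E] [BorelSpace E]
  [NormedAddCommGroup F] [NormedSpace ℝ F] {μ : Measure E} {f g : E → ℝ}

/-- A function is tempered if it becomes integrable after division by some power of `1 + ‖x‖`, so
that integration against it is a tempered distribution. -/
def IsTemperedFun (f : E → ℝ) (μ : Measure E) : Prop :=
  ∃ k : ℕ, Integrable (fun x => ((1 + ‖x‖) ^ k)⁻¹ * f x) μ

namespace IsTemperedFun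

theorem locallyIntegrable [ProperSpace E] (hf : IsTemperedFun f μ) : LocallyIntegrable f μ := by
  obtain ⟨k, hk⟩ := hf
  refine (hk.locallyIntegrable.continuous_mul (g := fun x => (1 + ‖x‖) ^ k) (by fun_prop)).congr
    (Eventually.of_forall fun x => mul_inv_cancel_left₀ ?_ _)
  positivity

variable [SecondCountableTopology E]

theorem aestronglyMeasurable (hf : IsTemperedFun f μ) : AEStronglyMeasurable f μ := by
  obtain ⟨k, hk⟩ := hf
  have h : AEStronglyMeasurable (fun x : E => (1 + ‖x‖) ^ k) μ := by fun_prop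
  refine (h.mul hk.aestronglyMeasurable).congr
    (Eventually.of_forall fun x => mul_inv_cancel_left₀ ?_ _)
  positivity

theorem mono {C : ℝ} (hf : IsTemperedFun f μ) (hg : AEStronglyMeasurable g μ)
    (h : ∀ᵐ x ∂μ, |g x| ≤ C * f x) : IsTemperedFun g μ := by
  obtain ⟨k, hk⟩ := hf
  refine ⟨k, (hk.const_mul C).mono' (by fun_prop) ?_⟩
  filter_upwards [h] with x hx
  rw [norm_mul, norm_inv, norm_pow, Real.norm_of_nonneg (by positivity : 0 ≤ 1 + ‖x‖),
    mul_left_comm, Real.norm_eq_abs]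
  gcongr

end IsTemperedFun

variable [NormedSpace ℝ E]

namespace IsTemperedFun

variable [SecondCountableTopology E]

theorem integrable_smul_schwartz (hf : IsTemperedFun f μ) (φ : 𝓢(E, F)) :
    Integrable (fun x => f x • φ x) μ := by
  have hfm := hf.aestronglyMeasurable
  obtain ⟨k, hk⟩ := hf
  exact (hk.norm.const_mul _).mono' (hfm.smul φ.continuous.aestronglyMeasurable)
    (Eventually.of_forall fun x => norm_smul_schwartz_le k φ (f x) x)

theorem exists_clm_eq_integral (hf : IsTemperedFun f μ) :
    ∃ T : 𝓢(E, F) →L[ℝ] F, ∀ φ, T φ = ∫ x, f x • φ x ∂μ := by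
  obtain ⟨k, hk⟩ := id hf
  refine ⟨SchwartzMap.mkCLMtoNormedSpace (fun φ => ∫ x, f x • φ x ∂μ) (fun φ ψ => ?_)
    (fun a φ => ?_) ⟨Finset.Iic (k, 0), 2 ^ k * ∫ x, ‖((1 + ‖x‖) ^ k)⁻¹ * f x‖ ∂μ,
      by positivity, fun φ => ?_⟩, fun φ => rfl⟩
  · simp only [add_apply, smul_add]
    exact integral_add (hf.integrable_smul_schwartz φ) (hf.integrable_smul_schwartz ψ)
  · simp only [smul_apply, smul_comm _ a, integral_smul, RingHom.id_apply]
  · calc ‖∫ x, f x • φ x ∂μ‖ ≤ ∫ x, _ * ‖((1 + ‖x‖) ^ k)⁻¹ * f x‖ ∂μ :=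
          norm_integral_le_of_norm_le (hk.norm.const_mul _)
            (Eventually.of_forall fun x => norm_smul_schwartz_le k φ (f x) x)
      _ = _ := by rw [integral_const_mul]; exact mul_right_comm _ _ _

end IsTemperedFun

end Tempered

theorem IsTemperedFun.prod_mul {E F : Type*} [NormedAddCommGroup E] [MeasurableSpace E]
    [BorelSpace E] [SecondCountableTopology E] [NormedAddCommGroup F] [MeasurableSpace F]
    [BorelSpace F] [SecondCountableTopology F] {μ : Measure E} {ν : Measure F} {f : E → ℝ}
    {g : F → ℝ} (hf : IsTemperedFun f μ) (hg : IsTemperedFun g ν) :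
    IsTemperedFun (fun p : E × F => f p.1 * g p.2) (μ.prod ν) := by
  have hfm := hf.aestronglyMeasurable
  have hgm := hg.aestronglyMeasurable
  obtain ⟨k, hk⟩ := hf
  obtain ⟨l, hl⟩ := hg
  have hm : AEStronglyMeasurable (fun p : E × F => ((1 + ‖p‖) ^ (k + l))⁻¹) (μ.prod ν) := by
    fun_prop
  refine ⟨k + l, (hk.mul_prod hl).mono (hm.mul (hfm.comp_fst.mul hgm.comp_snd))
    (Eventually.of_forall fun p => ?_)⟩
  have hweight : ((1 + ‖p‖) ^ (k + l))⁻¹ ≤ ((1 + ‖p.1‖) ^ k)⁻¹ * ((1 + ‖p.2‖) ^ l)⁻¹ := by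
    rw [← mul_inv, pow_add]
    gcongr
    exacts [norm_fst_le p, norm_snd_le p]
  calc ‖((1 + ‖p‖) ^ (k + l))⁻¹ * (f p.1 * g p.2)‖
      = ((1 + ‖p‖) ^ (k + l))⁻¹ * ‖f p.1 * g p.2‖ := by
        rw [norm_mul, Real.norm_of_nonneg (by positivity)]
    _ ≤ ((1 + ‖p.1‖) ^ k)⁻¹ * ((1 + ‖p.2‖) ^ l)⁻¹ * ‖f p.1 * g p.2‖ := by gcongr
    _ = ‖((1 + ‖p.1‖) ^ k)⁻¹ * f p.1 * (((1 + ‖p.2‖) ^ l)⁻¹ * g p.2)‖ := by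
        rw [← Real.norm_of_nonneg
          (by positivity : 0 ≤ ((1 + ‖p.1‖) ^ k)⁻¹ * ((1 + ‖p.2‖) ^ l)⁻¹), ← norm_mul,
          mul_mul_mul_comm]

theorem isTemperedFun_norm_rpow {E : Type*} [NormedAddCommGroup E] [NormedSpace ℝ E]
    [FiniteDimensional ℝ E] [MeasurableSpace E] [BorelSpace E] {μ : Measure E}
    [μ.IsAddHaarMeasure] [Nontrivial E] {a : ℝ} (ha : -Module.finrank ℝ E < a) :
    IsTemperedFun (fun x : E => ‖x‖ ^ a) μ := by
  obtain ⟨k, hk⟩ := exists_nat_gt (Module.finrank ℝ E + a)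
  refine ⟨k, (integrable_fun_norm_addHaar μ (f := fun y => ((1 + y) ^ k)⁻¹ * y ^ a)).2 ?_⟩
  have hd : ((Module.finrank ℝ E - 1 : ℕ) : ℝ) = Module.finrank ℝ E - 1 := by
    rw [Nat.cast_sub Module.finrank_pos, Nat.cast_one]
  set d := Module.finrank ℝ E
  have hpow {y : ℝ} (hy : 0 < y) : y ^ (d - 1) * y ^ a = y ^ (d - 1 + a) := by
    rw [← Real.rpow_natCast, hd, ← Real.rpow_add hy]
  have hm (s : Set ℝ) : AEStronglyMeasurable
      (fun y : ℝ => y ^ (d - 1) • (((1 + y) ^ k)⁻¹ * y ^ a)) (volume.restrict s) :=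
    Measurable.aestronglyMeasurable (by fun_prop)
  have hnear : IntegrableOn (fun y : ℝ => y ^ (d - 1) • (((1 + y) ^ k)⁻¹ * y ^ a)) (Ioc 0 1) := by
    refine Integrable.mono' ((intervalIntegrable_iff_integrableOn_Ioc_of_le zero_le_one).1
      (intervalIntegral.intervalIntegrable_rpow' (by linarith : -1 < d - 1 + a))) (hm _)
      (ae_restrict_of_forall_mem measurableSet_Ioc fun y hy => ?_)
    have hy0 : 0 < y := hy.1
    rw [smul_eq_mul, mul_left_comm, hpow hy0, Real.norm_of_nonneg (by positivity)]
    exact mul_le_of_le_one_left (by positivity)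
      (inv_le_one_of_one_le₀ (one_le_pow₀ (by linarith)))
  have hfar : IntegrableOn (fun y : ℝ => y ^ (d - 1) • (((1 + y) ^ k)⁻¹ * y ^ a)) (Ioi 1) := by
    refine Integrable.mono' (integrableOn_Ioi_rpow_of_lt (a := -k + (d - 1 + a)) (by linarith)
      one_pos) (hm _) (ae_restrict_of_forall_mem measurableSet_Ioi fun y (hy : 1 < y) => ?_)
    have hy0 : 0 < y := by linarith
    rw [smul_eq_mul, mul_left_comm, hpow hy0, Real.norm_of_nonneg (by positivity),
      Real.rpow_add hy0 (-k), Real.rpow_neg hy0.le, Real.rpow_natCast]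
    gcongr
    linarith
  rw [← Ioc_union_Ioi_eq_Ioi zero_le_one]
  exact hnear.union hfar

/-! ### The Korányi kernel -/

theorem ae_ne_zero_fst : ∀ᵐ p : ℝ × ℝ, p.1 ≠ 0 :=
  Measure.quasiMeasurePreserving_fst.ae (Measure.ae_ne volume 0)

theorem ae_ne_zero_snd : ∀ᵐ p : ℝ × ℝ, p.2 ≠ 0 :=
  Measure.quasiMeasurePreserving_snd.ae (Measure.ae_ne volume 0)

theorem koranyiKernel_nonneg (s : ℝ) (p : ℝ × ℝ) : 0 ≤ koranyiKernel s p := by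
  unfold koranyiKernel
  positivity

@[fun_prop]
theorem measurable_koranyiKernel (s : ℝ) : Measurable (koranyiKernel s) := by
  unfold koranyiKernel
  fun_prop

theorem koranyiKernel_le_one {s : ℝ} (hs : 0 ≤ s) {p : ℝ × ℝ} (hp : 1 ≤ ‖p‖) :
    koranyiKernel s p ≤ 1 := by
  refine Real.rpow_le_one_of_one_le_of_nonpos ?_ (by linarith)
  rw [Prod.norm_def, le_max_iff] at hp
  rcases hp with h | h
  · calc 1 ≤ ‖p.1‖ ^ 4 := one_le_pow₀ h
      _ = p.1 ^ 4 := Even.pow_abs (by decide) _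
      _ ≤ p.1 ^ 4 + p.2 ^ 2 := le_add_of_nonneg_right (sq_nonneg _)
  · calc 1 ≤ ‖p.2‖ ^ 2 := one_le_pow₀ h
      _ = p.2 ^ 2 := sq_abs _
      _ ≤ p.1 ^ 4 + p.2 ^ 2 := le_add_of_nonneg_left (by positivity)

theorem abs_rpow_mul_abs_rpow_le (x t : ℝ) :
    |x| ^ (4 / 3 : ℝ) * |t| ^ (4 / 3 : ℝ) ≤ x ^ 4 + t ^ 2 := by
  have hx : (x ^ 4) ^ (1 / 3 : ℝ) = |x| ^ (4 / 3 : ℝ) := by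
    rw [← Even.pow_abs (by decide : Even 4), ← Real.rpow_natCast, ← Real.rpow_mul (abs_nonneg x)]
    norm_num
  have ht : (t ^ 2) ^ (2 / 3 : ℝ) = |t| ^ (4 / 3 : ℝ) := by
    rw [← sq_abs, ← Real.rpow_natCast, ← Real.rpow_mul (abs_nonneg t)]
    norm_num
  calc |x| ^ (4 / 3 : ℝ) * |t| ^ (4 / 3 : ℝ)
      = (x ^ 4) ^ (1 / 3 : ℝ) * (t ^ 2) ^ (2 / 3 : ℝ) := by rw [hx, ht]
    _ ≤ 1 / 3 * x ^ 4 + 2 / 3 * t ^ 2 := Real.geom_mean_le_arith_mean2_weighted (by norm_num)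
        (by norm_num) (by positivity) (by positivity) (by norm_num)
    _ ≤ x ^ 4 + t ^ 2 := by
        have hx4 : 0 ≤ x ^ 4 := by positivity
        linarith [sq_nonneg t]

theorem koranyiKernel_le_mul_abs_rpow {s : ℝ} (hs : 0 ≤ s) {p : ℝ × ℝ} (h₁ : p.1 ≠ 0)
    (h₂ : p.2 ≠ 0) : koranyiKernel s p ≤ |p.1| ^ (-(s / 3)) * |p.2| ^ (-(s / 3)) := by
  have hexp : -(s / 3) = 4 / 3 * -(s / 4) := by ring
  have h₁ := abs_pos.2 h₁
  have h₂ := abs_pos.2 h₂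
  rw [hexp, Real.rpow_mul h₁.le, Real.rpow_mul h₂.le,
    ← Real.mul_rpow (by positivity) (by positivity)]
  exact Real.rpow_le_rpow_of_nonpos (by positivity) (abs_rpow_mul_abs_rpow_le p.1 p.2)
    (by linarith)

theorem isTemperedFun_koranyiKernel {s : ℝ} (hs : s ∈ Ico (0 : ℝ) 3) :
    IsTemperedFun (koranyiKernel s) volume := by
  have h : IsTemperedFun (fun x : ℝ => ‖x‖ ^ (-(s / 3))) volume :=
    isTemperedFun_norm_rpow (by rw [Module.finrank_self]; push_cast; linarith [hs.2])
  refine (h.prod_mul h).mono (C := 1) (by fun_prop) ?_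
  filter_upwards [ae_ne_zero_fst, ae_ne_zero_snd] with p h₁ h₂
  rw [abs_of_nonneg (koranyiKernel_nonneg s p), one_mul]
  exact koranyiKernel_le_mul_abs_rpow hs.1 h₁ h₂

/-! ### Euler's integral in the right half-plane -/

/-- The measure `x^{α-1} dx` on the half-line `x > 0`, whose Laplace transform is Euler's
integral. -/
noncomputable def eulerMeasure (α : ℝ) : Measure ℝ :=
  (volume.restrict (Ioi 0)).withDensity fun x => ENNReal.ofReal (x ^ (α - 1))

theorem complexMGF_eulerMeasure (α : ℝ) (z : ℂ) :
    ProbabilityTheory.complexMGF id (eulerMeasure α) z =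
      ∫ x : ℝ in Ioi 0, ((x ^ (α - 1) : ℝ) : ℂ) * Complex.exp (z * x) := by
  rw [ProbabilityTheory.complexMGF, eulerMeasure,
    integral_withDensity_eq_integral_toReal_smul (by fun_prop) (by simp)]
  refine setIntegral_congr_fun measurableSet_Ioi fun x (hx : 0 < x) => ?_
  rw [ENNReal.toReal_ofReal (by positivity), Complex.real_smul, id]

theorem integrableOn_rpow_mul_cexp {α : ℝ} (hα : 0 < α) {r : ℂ} (hr : 0 < r.re) :
    IntegrableOn (fun x : ℝ => ((x ^ (α - 1) : ℝ) : ℂ) * Complex.exp (-r * x)) (Ioi 0) := by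
  have h : IntegrableOn (fun x : ℝ => x ^ (α - 1) * Real.exp (-r.re * x)) (Ioi 0) := by
    simpa only [Real.rpow_one] using
      integrableOn_rpow_mul_exp_neg_mul_rpow (by linarith : -1 < α - 1) one_pos hr
  refine h.mono' (Measurable.aestronglyMeasurable (by fun_prop))
    (ae_restrict_of_forall_mem measurableSet_Ioi fun x (hx : 0 < x) => le_of_eq ?_)
  rw [norm_mul, Complex.norm_real, Real.norm_of_nonneg (by positivity), Complex.norm_exp,
    Complex.re_mul_ofReal, Complex.neg_re]

theorem Iio_subset_integrableExpSet_eulerMeasure {α : ℝ} (hα : 0 < α) :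
    Iio 0 ⊆ ProbabilityTheory.integrableExpSet id (eulerMeasure α) := by
  intro t (ht : t < 0)
  rw [ProbabilityTheory.integrableExpSet, mem_ofPred_eq, eulerMeasure,
    integrable_withDensity_iff_integrable_smul' (by fun_prop) (by simp)]
  refine IntegrableOn.congr_fun (integrableOn_rpow_mul_cexp hα (r := -t) (by simpa using ht)).re
    (fun x (hx : 0 < x) => ?_) measurableSet_Ioi
  rw [ENNReal.toReal_ofReal (by positivity), smul_eq_mul, neg_neg, ← Complex.ofReal_mul,
    ← Complex.ofReal_exp, ← Complex.ofReal_mul]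
  exact Complex.ofReal_re _

theorem complexMGF_eulerMeasure_ofReal {α : ℝ} (hα : 0 < α) {t : ℝ} (ht : t < 0) :
    ProbabilityTheory.complexMGF id (eulerMeasure α) t =
      (-t : ℂ) ^ (-(α : ℂ)) * Real.Gamma α := by
  have h := Real.integral_rpow_mul_exp_neg_mul_Ioi hα (neg_pos.2 ht)
  rw [ProbabilityTheory.complexMGF_ofReal, ProbabilityTheory.mgf, eulerMeasure,
    integral_withDensity_eq_integral_toReal_smul (by fun_prop) (by simp), ← Complex.ofReal_neg,
    ← Complex.ofReal_neg, ← Complex.ofReal_cpow (by linarith), ← Complex.ofReal_mul,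
    Real.rpow_neg (by linarith), ← Real.inv_rpow (by linarith), inv_eq_one_div, ← h]
  congr 1
  refine setIntegral_congr_fun measurableSet_Ioi fun x (hx : 0 < x) => ?_
  rw [ENNReal.toReal_ofReal (by positivity), smul_eq_mul, neg_mul, neg_neg, id]

theorem frequently_nhdsNE_ofReal {p : ℂ → Prop} {x : ℝ} (h : ∀ᶠ t : ℝ in 𝓝 x, p t) :
    ∃ᶠ z in 𝓝[≠] (x : ℂ), p z :=
  (Complex.ofRealCLM.hasDerivAt.tendsto_nhdsNE (by simp)).frequently
    (h.filter_mono nhdsWithin_le_nhds).frequently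

/-- Analytic continuation from `r > 0`. -/
theorem integral_rpow_mul_cexp {α : ℝ} (hα : 0 < α) {r : ℂ} (hr : 0 < r.re) :
    ∫ x : ℝ in Ioi 0, ((x ^ (α - 1) : ℝ) : ℂ) * Complex.exp (-r * x) =
      r ^ (-(α : ℂ)) * Real.Gamma α := by
  have hmgf : AnalyticOnNhd ℂ (ProbabilityTheory.complexMGF id (eulerMeasure α))
      {z : ℂ | z.re < 0} := ProbabilityTheory.analyticOnNhd_complexMGF.mono fun z hz =>
    interior_maximal (Iio_subset_integrableExpSet_eulerMeasure hα) isOpen_Iio hz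
  have hpow : AnalyticOnNhd ℂ (fun z : ℂ => (-z) ^ (-(α : ℂ)) * Real.Gamma α)
      {z : ℂ | z.re < 0} := fun z (hz : z.re < 0) =>
    (analyticAt_id.neg.cpow analyticAt_const (Or.inl (by simpa using hz))).mul analyticAt_const
  have hfreq : ∃ᶠ z : ℂ in 𝓝[≠] ((-1 : ℝ) : ℂ),
      ProbabilityTheory.complexMGF id (eulerMeasure α) z =
        (-z) ^ (-(α : ℂ)) * Real.Gamma α :=
    frequently_nhdsNE_ofReal <| (eventually_lt_nhds (by norm_num)).mono fun t ht =>
      complexMGF_eulerMeasure_ofReal hα ht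
  have h := hmgf.eqOn_of_preconnected_of_frequently_eq hpow
    (convex_halfSpace_re_lt 0).isPreconnected (by simp) hfreq
    (show -r ∈ {z : ℂ | z.re < 0} by simpa using hr)
  simpa only [complexMGF_eulerMeasure, neg_neg] using h

/-! ### The kernel as a superposition of characters over the cone -/

/-- The density `(v² - τ²)^{α-1}` on the cone `|τ| < v`, extended by zero, at `q = (τ, v)`. -/
noncomputable def coneDensity (α : ℝ) (q : ℝ × ℝ) : ℝ :=
  if |q.1| < q.2 then (q.2 ^ 2 - q.1 ^ 2) ^ (α - 1) else 0

theorem coneDensity_nonneg (α : ℝ) (q : ℝ × ℝ) : 0 ≤ coneDensity α q := by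
  unfold coneDensity
  split_ifs with h
  · exact Real.rpow_nonneg (sub_nonneg.2 (sq_le_sq.2 (h.le.trans (le_abs_self _)))) _
  · exact le_rfl

@[fun_prop]
theorem measurable_coneDensity (α : ℝ) : Measurable (coneDensity α) :=
  Measurable.ite (measurableSet_lt (by fun_prop) (by fun_prop)) (by fun_prop) (by fun_prop)

/-- The linear change of variables `(τ, v) ↦ (v - τ, v + τ)`, which carries the cone to the open
first quadrant. -/
noncomputable def coneMap : (ℝ × ℝ) →ₗ[ℝ] (ℝ × ℝ) :=
  Matrix.toLin (Module.Basis.finTwoProd ℝ) (Module.Basis.finTwoProd ℝ) !![-1, 1; 1, 1]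

theorem coneMap_apply (q : ℝ × ℝ) : coneMap q = (q.2 - q.1, q.2 + q.1) := by
  rw [coneMap, Matrix.toLin_finTwoProd_apply]
  ext <;> simp only <;> ring

theorem measurable_coneMap : Measurable coneMap :=
  coneMap.continuous_of_finiteDimensional.measurable

theorem map_coneMap : Measure.map coneMap volume = ENNReal.ofReal (1 / 2) • volume := by
  have hdet : LinearMap.det coneMap = -2 := by
    rw [coneMap, LinearMap.det_toLin, Matrix.det_fin_two_of]
    norm_num
  rw [Measure.map_linearMap_addHaar_eq_smul_addHaar _ (by rw [hdet]; norm_num), hdet]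
  norm_num

/-- The integrand `x^{α-1} e^{-rx}` of Euler's integral, extended by zero to `x ≤ 0`. -/
noncomputable def eulerFactor (α : ℝ) (r : ℂ) : ℝ → ℂ :=
  indicator (Ioi 0) fun x : ℝ => ((x ^ (α - 1) : ℝ) : ℂ) * Complex.exp (-r * x)

theorem integrable_eulerFactor {α : ℝ} (hα : 0 < α) {r : ℂ} (hr : 0 < r.re) :
    Integrable (eulerFactor α r) :=
  (integrable_indicator_iff measurableSet_Ioi).2 (integrableOn_rpow_mul_cexp hα hr)

theorem integral_eulerFactor {α : ℝ} (hα : 0 < α) {r : ℂ} (hr : 0 < r.re) :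
    ∫ x, eulerFactor α r x = r ^ (-(α : ℂ)) * Real.Gamma α :=
  (integral_indicator measurableSet_Ioi).trans (integral_rpow_mul_cexp hα hr)

theorem eulerFactor_mul_eulerFactor (α b t : ℝ) (q : ℝ × ℝ) :
    eulerFactor α (π * (b + t * Complex.I)) (coneMap q).1 *
      eulerFactor α (π * (b - t * Complex.I)) (coneMap q).2 =
    coneDensity α q * Complex.exp (2 * π * (t * q.1 * Complex.I - b * q.2)) := by
  obtain ⟨τ, v⟩ := q
  rw [coneMap_apply, coneDensity, eulerFactor, eulerFactor]
  have hcone : |τ| < v ↔ v - τ ∈ Ioi 0 ∧ v + τ ∈ Ioi 0 := by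
    rw [abs_lt, mem_Ioi, mem_Ioi, sub_pos, and_comm, neg_lt_iff_pos_add']
  by_cases h : |τ| < v
  · obtain ⟨h₁, h₂⟩ := hcone.1 h
    rw [if_pos h, indicator_of_mem h₁, indicator_of_mem h₂, mul_mul_mul_comm, ← Complex.exp_add,
      ← Complex.ofReal_mul, ← Real.mul_rpow (le_of_lt h₁) (le_of_lt h₂)]
    push_cast
    ring_nf
  · rw [if_neg h, Complex.ofReal_zero, zero_mul, mul_eq_zero]
    exact (not_and_or.1 (mt hcone.2 h)).imp (indicator_of_notMem · _) (indicator_of_notMem · _)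

theorem re_pi_mul_pos {b : ℝ} (hb : 0 < b) (t : ℝ) :
    0 < (π * (b + t * Complex.I) : ℂ).re ∧ 0 < (π * (b - t * Complex.I) : ℂ).re := by
  simp [hb, Real.pi_pos]

theorem integrable_coneDensity_mul_cexp {α : ℝ} (hα : 0 < α) {b : ℝ} (hb : 0 < b) (t : ℝ) :
    Integrable fun q : ℝ × ℝ =>
      (coneDensity α q : ℂ) * Complex.exp (2 * π * (t * q.1 * Complex.I - b * q.2)) := by
  obtain ⟨h₁, h₂⟩ := re_pi_mul_pos hb t
  have h := ((integrable_eulerFactor hα h₁).mul_prod (integrable_eulerFactor hα h₂)).smul_measure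
    (c := ENNReal.ofReal (1 / 2)) ENNReal.ofReal_ne_top
  rw [← Measure.volume_eq_prod, ← map_coneMap] at h
  simpa only [Function.comp_def, eulerFactor_mul_eulerFactor] using
    h.comp_measurable measurable_coneMap

/-- The constant `c` in `c (b² + t²)^{-α} = ∫_{|τ| < v} (v² - τ²)^{α-1} e^{2π(itτ - bv)} dτ dv`. -/
noncomputable def coneConst (α : ℝ) : ℝ :=
  1 / 2 * π ^ (-(2 * α)) * Real.Gamma α ^ 2

theorem coneConst_pos {α : ℝ} (hα : 0 < α) : 0 < coneConst α := by
  have := Real.Gamma_pos_of_pos hα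
  unfold coneConst
  positivity

theorem cpow_mul_conj_cpow {z : ℂ} (hz : 0 < z.re) (a : ℝ) :
    z ^ (a : ℂ) * (starRingEnd ℂ z) ^ (a : ℂ) = ((Complex.normSq z ^ a : ℝ) : ℂ) := by
  have harg : z.arg ≠ π := fun h => by linarith [(Complex.arg_eq_pi_iff.1 h).1]
  have hconj : (starRingEnd ℂ z) ^ (a : ℂ) = starRingEnd ℂ (z ^ (a : ℂ)) := by
    rw [Complex.conj_cpow _ _ harg, Complex.conj_ofReal]
  rw [hconj, Complex.mul_conj, Complex.normSq_eq_norm_sq, Complex.normSq_eq_norm_sq,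
    Complex.norm_cpow_real, Real.rpow_pow_comm (norm_nonneg z)]

theorem integral_coneDensity_mul_cexp {α : ℝ} (hα : 0 < α) {b : ℝ} (hb : 0 < b) (t : ℝ) :
    ∫ q : ℝ × ℝ, (coneDensity α q : ℂ) * Complex.exp (2 * π * (t * q.1 * Complex.I - b * q.2)) =
      ((coneConst α * (b ^ 2 + t ^ 2) ^ (-α) : ℝ) : ℂ) := by
  obtain ⟨h₁, h₂⟩ := re_pi_mul_pos hb t
  set z : ℂ := π * (b + t * Complex.I) with hz
  have hconj : (π * (b - t * Complex.I) : ℂ) = starRingEnd ℂ z := by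
    simp [hz, sub_eq_add_neg]
  have hnorm : Complex.normSq z = π ^ 2 * (b ^ 2 + t ^ 2) := by
    rw [hz, Complex.normSq_mul, Complex.normSq_add_mul_I, Complex.normSq_ofReal]
    ring
  have hprod := (integrable_eulerFactor hα h₁).mul_prod (integrable_eulerFactor hα h₂)
  have hpow : Complex.normSq z ^ (-α) = π ^ (-(2 * α)) * (b ^ 2 + t ^ 2) ^ (-α) := by
    rw [hnorm, Real.mul_rpow (by positivity) (by positivity), ← Real.rpow_natCast,
      ← Real.rpow_mul Real.pi_pos.le, Nat.cast_ofNat, mul_neg]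
  calc ∫ q : ℝ × ℝ, (coneDensity α q : ℂ) * Complex.exp (2 * π * (t * q.1 * Complex.I - b * q.2))
      = ∫ p : ℝ × ℝ, eulerFactor α z p.1 * eulerFactor α (π * (b - t * Complex.I)) p.2
          ∂(Measure.map coneMap volume) := by
        rw [integral_map measurable_coneMap.aemeasurable]
        · simp only [hz, eulerFactor_mul_eulerFactor]
        · rw [map_coneMap]
          exact (hprod.smul_measure ENNReal.ofReal_ne_top).aestronglyMeasurable
    _ = (1 / 2 : ℝ) • ((z ^ ((-α : ℝ) : ℂ) * (starRingEnd ℂ z) ^ ((-α : ℝ) : ℂ)) *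
          (Real.Gamma α * Real.Gamma α)) := by
        rw [map_coneMap, integral_smul_measure, Measure.volume_eq_prod, integral_prod_mul,
          integral_eulerFactor hα h₁, integral_eulerFactor hα h₂, hconj,
          ENNReal.toReal_ofReal (by norm_num), mul_mul_mul_comm, Complex.ofReal_neg]
    _ = ((coneConst α * (b ^ 2 + t ^ 2) ^ (-α) : ℝ) : ℂ) := by
        rw [cpow_mul_conj_cpow h₁, hpow, Complex.real_smul, coneConst]
        push_cast
        ring

/-! ### The dual Gaussian -/

/-- The Gaussian `γ_v(ξ) = (2v)^{-1/2} e^{-πξ²/(2v)}`, whose Fourier transform is `e^{-2πvx²}`. It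
is the normal density of variance `v/π`; for `v ≤ 0` Mathlib's convention makes it zero. -/
noncomputable def dualGaussian (v ξ : ℝ) : ℝ :=
  ProbabilityTheory.gaussianPDFReal 0 (v / π).toNNReal ξ

theorem dualGaussian_nonneg (v ξ : ℝ) : 0 ≤ dualGaussian v ξ :=
  ProbabilityTheory.gaussianPDFReal_nonneg _ _ _

theorem dualGaussian_of_pos {v : ℝ} (hv : 0 < v) (ξ : ℝ) :
    dualGaussian v ξ = (2 * v) ^ (-(1 / 2) : ℝ) * Real.exp (-π * ξ ^ 2 / (2 * v)) := by
  have hvar : 2 * π * (v / π) = 2 * v := by field_simp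
  rw [dualGaussian, ProbabilityTheory.gaussianPDFReal, Real.coe_toNNReal _ (by positivity), hvar,
    Real.sqrt_eq_rpow, Real.rpow_neg (by positivity), sub_zero]
  congr 2
  field_simp

theorem integrable_dualGaussian (v : ℝ) : Integrable (dualGaussian v) :=
  ProbabilityTheory.integrable_gaussianPDFReal 0 _

@[fun_prop]
theorem measurable_dualGaussian {X : Type*} [MeasurableSpace X] {f g : X → ℝ} (hf : Measurable f)
    (hg : Measurable g) : Measurable fun x => dualGaussian (f x) (g x) := by
  have h : Measurable fun x => ((0 : ℝ), (f x / π).toNNReal, g x) := by fun_prop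
  exact ProbabilityTheory.measurable_uncurry_gaussianPDFReal.comp h

theorem integral_cexp_mul_dualGaussian {v : ℝ} (hv : 0 < v) (x : ℝ) :
    ∫ ξ : ℝ, Complex.exp (2 * π * (x * ξ) * Complex.I) * dualGaussian v ξ =
      Complex.exp (-(2 * π * (x ^ 2 * v))) := by
  have hvar : (v / π).toNNReal ≠ 0 := (Real.toNNReal_pos.2 (by positivity)).ne'
  have h := ProbabilityTheory.charFun_gaussianReal (μ := 0) (v := (v / π).toNNReal) (2 * π * x)
  rw [charFun_apply_real, ProbabilityTheory.integral_gaussianReal_eq_integral_smul hvar] at h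
  simp only [Complex.real_smul] at h
  rw [Real.coe_toNNReal _ (by positivity)] at h
  convert h using 1
  · congr with ξ
    rw [mul_comm, dualGaussian]
    push_cast
    ring_nf
  · have := Real.pi_ne_zero
    push_cast
    congr 1
    field_simp
    ring

/-! ### The scaling profile -/

/-- The weight `y^{β-1} (1 - y²)^{α-1}` of a Beta integral in the variable `y²`. -/
noncomputable def betaWeight (α β y : ℝ) : ℝ :=
  y ^ (β - 1) * (1 - y ^ 2) ^ (α - 1)

/-- The Laplace transform of the Beta weight on `(0, 1)`; it is the profile of the Fourier
transform of the Korányi kernel along the parabolas `ξ² = const · |τ|`. -/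
noncomputable def betaLaplace (α β c : ℝ) : ℝ :=
  ∫ y in Ioo 0 1, betaWeight α β y * Real.exp (-(c * y))

@[fun_prop]
theorem measurable_betaWeight (α β : ℝ) : Measurable (betaWeight α β) := by
  unfold betaWeight
  fun_prop

theorem one_sub_sq_pos {y : ℝ} (hy : y ∈ Ioo (0 : ℝ) 1) : 0 < 1 - y ^ 2 :=
  sub_pos.2 (pow_lt_one₀ hy.1.le hy.2 two_ne_zero)

theorem betaWeight_pos (α β : ℝ) {y : ℝ} (hy : y ∈ Ioo (0 : ℝ) 1) : 0 < betaWeight α β y :=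
  mul_pos (Real.rpow_pos_of_pos hy.1 _) (Real.rpow_pos_of_pos (one_sub_sq_pos hy) _)

theorem betaWeight_two (α y : ℝ) : betaWeight α 2 y = y * (1 - y ^ 2) ^ (α - 1) := by
  rw [betaWeight, show (2 : ℝ) - 1 = 1 by norm_num, Real.rpow_one]

theorem integrableOn_betaWeight_two {α : ℝ} (hα : 0 < α) :
    IntegrableOn (betaWeight α 2) (Ioo 0 1) := by
  have hderiv (y : ℝ) (hy : y ∈ Ioo (0 : ℝ) 1) :
      HasDerivAt (fun y => -((1 - y ^ 2) ^ α / (2 * α))) (betaWeight α 2 y) y := by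
    refine ((((hasDerivAt_pow 2 y).const_sub 1).rpow_const
      (Or.inl (one_sub_sq_pos hy).ne')).div_const (2 * α)).neg.congr_deriv ?_
    rw [betaWeight_two]
    simp only [Nat.cast_ofNat, Nat.add_one_sub_one, pow_one]
    field_simp
  have hcont : ContinuousOn (fun y : ℝ => -((1 - y ^ 2) ^ α / (2 * α))) (Icc 0 1) :=
    (((continuous_const.sub (continuous_pow 2)).rpow_const fun _ => Or.inr hα.le).div_const
      _).neg.continuousOn
  exact (intervalIntegral.integrableOn_deriv_of_nonneg hcont hderiv fun y hy =>
    (betaWeight_pos α 2 hy).le).mono_set Ioo_subset_Ioc_self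

/-- Splits `1 = (1 - y²) + y²`, which separates the singularities at `0` and at `1`. -/
theorem betaWeight_le {α β y : ℝ} (hα : 0 ≤ α) (hy : y ∈ Ioo (0 : ℝ) 1) :
    betaWeight α β y ≤ y ^ (β - 1) + y ^ β * betaWeight α 2 y := by
  have h1y := one_sub_sq_pos hy
  have hy0 : 0 < y := hy.1
  calc betaWeight α β y
      = y ^ (β - 1) * ((1 - y ^ 2) * (1 - y ^ 2) ^ (α - 1) + y ^ 2 * (1 - y ^ 2) ^ (α - 1)) := by
        rw [betaWeight]
        ring
    _ = y ^ (β - 1) * (1 - y ^ 2) ^ α + y ^ (β - 1) * y * (y * (1 - y ^ 2) ^ (α - 1)) := by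
        rw [mul_comm (1 - y ^ 2), ← Real.rpow_add_one h1y.ne', sub_add_cancel]
        ring
    _ = y ^ (β - 1) * (1 - y ^ 2) ^ α + y ^ β * betaWeight α 2 y := by
        rw [← Real.rpow_add_one hy0.ne', sub_add_cancel, betaWeight_two]
    _ ≤ y ^ (β - 1) + y ^ β * betaWeight α 2 y := by
        gcongr
        exact mul_le_of_le_one_right (by positivity)
          (Real.rpow_le_one h1y.le (by linarith [sq_nonneg y]) hα)

theorem integrableOn_betaWeight {α β : ℝ} (hα : 0 < α) (hβ : 0 < β) :
    IntegrableOn (betaWeight α β) (Ioo 0 1) := by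
  have hpow : IntegrableOn (fun y : ℝ => y ^ (β - 1)) (Ioo 0 1) :=
    (intervalIntegral.integrableOn_Ioo_rpow_iff one_pos).2 (by linarith)
  refine (hpow.add (integrableOn_betaWeight_two hα)).mono' (by fun_prop)
    (ae_restrict_of_forall_mem measurableSet_Ioo fun y hy => ?_)
  have hw := betaWeight_pos α 2 hy
  rw [Real.norm_of_nonneg (betaWeight_pos α β hy).le]
  refine (betaWeight_le hα.le hy).trans (add_le_add_right ?_ _)
  exact mul_le_of_le_one_left hw.le (Real.rpow_le_one hy.1.le hy.2.le hβ.le)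

theorem integrableOn_betaWeight_mul_exp {α β c : ℝ} (hα : 0 < α) (hβ : 0 < β) (hc : 0 ≤ c) :
    IntegrableOn (fun y => betaWeight α β y * Real.exp (-(c * y))) (Ioo 0 1) := by
  refine (integrableOn_betaWeight hα hβ).mono' (by fun_prop)
    (ae_restrict_of_forall_mem measurableSet_Ioo fun y hy => ?_)
  have hw := betaWeight_pos α β hy
  have hcy := mul_nonneg hc hy.1.le
  rw [Real.norm_of_nonneg (by positivity)]
  exact mul_le_of_le_one_right hw.le (Real.exp_le_one_iff.2 (neg_nonpos.2 hcy))

theorem betaLaplace_pos {α β c : ℝ} (hα : 0 < α) (hβ : 0 < β) (hc : 0 ≤ c) :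
    0 < betaLaplace α β c := by
  refine (setIntegral_pos_iff_support_of_nonneg_ae (ae_restrict_of_forall_mem measurableSet_Ioo
    fun y hy => ?_) (integrableOn_betaWeight_mul_exp hα hβ hc)).2 ?_
  · exact (mul_pos (betaWeight_pos α β hy) (Real.exp_pos _)).le
  · have hsupp : Ioo 0 1 ⊆ Function.support fun y => betaWeight α β y * Real.exp (-(c * y)) :=
      fun y hy => (mul_pos (betaWeight_pos α β hy) (Real.exp_pos _)).ne'
    rw [inter_eq_right.2 hsupp]
    simp

theorem rpow_mul_exp_neg_le {β c y : ℝ} (hβ : 0 ≤ β) (hc : 0 < c) (hy : 0 ≤ y) :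
    y ^ β * Real.exp (-(c * y)) ≤ (β / c) ^ β := by
  have h := ProbabilityTheory.rpow_abs_le_mul_exp_abs y hβ hc.ne'
  rw [abs_of_nonneg hy, abs_of_pos hc] at h
  rwa [Real.exp_neg, ← div_eq_mul_inv, div_le_iff₀ (Real.exp_pos _)]

theorem betaWeight_mul_exp_le {α β c y : ℝ} (hα : 0 ≤ α) (hβ : 0 ≤ β) (hc : 0 < c)
    (hy : y ∈ Ioo (0 : ℝ) 1) : betaWeight α β y * Real.exp (-(c * y)) ≤
      y ^ (β - 1) * Real.exp (-(c * y)) + (β / c) ^ β * betaWeight α 2 y := by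
  have hw := (betaWeight_pos α 2 hy).le
  calc betaWeight α β y * Real.exp (-(c * y))
      ≤ (y ^ (β - 1) + y ^ β * betaWeight α 2 y) * Real.exp (-(c * y)) := by
        gcongr
        exact betaWeight_le hα hy
    _ = y ^ (β - 1) * Real.exp (-(c * y)) + y ^ β * Real.exp (-(c * y)) * betaWeight α 2 y := by
        ring
    _ ≤ y ^ (β - 1) * Real.exp (-(c * y)) + (β / c) ^ β * betaWeight α 2 y := by
        gcongr
        exact rpow_mul_exp_neg_le hβ hc hy.1.le

theorem betaLaplace_le_mul_rpow {α β c : ℝ} (hα : 0 < α) (hβ : 0 < β) (hc : 0 < c) :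
    betaLaplace α β c ≤
      (Real.Gamma β + β ^ β * ∫ y in Ioo 0 1, betaWeight α 2 y) * c ^ (-β) := by
  have hGamma : IntegrableOn (fun y : ℝ => y ^ (β - 1) * Real.exp (-(c * y))) (Ioi 0) := by
    simpa only [Real.rpow_one, neg_mul] using
      integrableOn_rpow_mul_exp_neg_mul_rpow (by linarith : -1 < β - 1) one_pos hc
  have hbeta := (integrableOn_betaWeight_two hα).const_mul ((β / c) ^ β)
  calc betaLaplace α β c
      ≤ ∫ y in Ioo 0 1, (y ^ (β - 1) * Real.exp (-(c * y)) + (β / c) ^ β * betaWeight α 2 y) :=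
        setIntegral_mono_on (integrableOn_betaWeight_mul_exp hα hβ hc.le)
          ((hGamma.mono_set Ioo_subset_Ioi_self).add hbeta) measurableSet_Ioo
          fun y hy => betaWeight_mul_exp_le hα.le hβ.le hc hy
    _ = (∫ y in Ioo 0 1, y ^ (β - 1) * Real.exp (-(c * y))) +
          (β / c) ^ β * ∫ y in Ioo 0 1, betaWeight α 2 y := by
        rw [integral_add (hGamma.mono_set Ioo_subset_Ioi_self) hbeta, integral_const_mul]
    _ ≤ (∫ y in Ioi 0, y ^ (β - 1) * Real.exp (-(c * y))) +
          (β / c) ^ β * ∫ y in Ioo 0 1, betaWeight α 2 y := by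
        refine add_le_add_left (setIntegral_mono_set hGamma (ae_restrict_of_forall_mem
          measurableSet_Ioi fun y (hy : 0 < y) => ?_) Ioo_subset_Ioi_self.eventuallyLE) _
        positivity
    _ = (Real.Gamma β + β ^ β * ∫ y in Ioo 0 1, betaWeight α 2 y) * c ^ (-β) := by
        rw [Real.integral_rpow_mul_exp_neg_mul_Ioi hβ hc, Real.div_rpow hβ.le hc.le,
          one_div, Real.inv_rpow hc.le, Real.rpow_neg hc.le]
        ring

theorem betaLaplace_le_exp_mul {α β c : ℝ} (hα : 0 < α) (hβ : 0 < β) (hc : 0 ≤ c) :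
    betaLaplace α β c ≤ Real.exp 1 * betaLaplace α β (1 + c) := by
  rw [betaLaplace, betaLaplace, ← integral_const_mul]
  refine setIntegral_mono_on (integrableOn_betaWeight_mul_exp hα hβ hc)
    ((integrableOn_betaWeight_mul_exp hα hβ (by linarith)).const_mul _) measurableSet_Ioo
    fun y hy => ?_
  have hw := (betaWeight_pos α β hy).le
  rw [mul_left_comm, ← Real.exp_add]
  gcongr
  linarith [hy.2]

theorem exists_betaLaplace_le {α β : ℝ} (hα : 0 < α) (hβ : 0 < β) :
    ∃ C, 0 < C ∧ ∀ c, 0 ≤ c → betaLaplace α β c ≤ C * (1 + c) ^ (-β) := by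
  have := Real.Gamma_pos_of_pos hβ
  have hbeta : 0 ≤ ∫ y in Ioo 0 1, betaWeight α 2 y :=
    setIntegral_nonneg measurableSet_Ioo fun y hy => (betaWeight_pos α 2 hy).le
  refine ⟨Real.exp 1 * (Real.Gamma β + β ^ β * ∫ y in Ioo 0 1, betaWeight α 2 y),
    by positivity, fun c hc => ?_⟩
  rw [mul_assoc]
  exact (betaLaplace_le_exp_mul hα hβ hc).trans
    (mul_le_mul_of_nonneg_left (betaLaplace_le_mul_rpow hα hβ (by linarith)) (by positivity))

/-! ### The Fourier transform of the kernel -/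

theorem image_const_div_Ioo_zero_one {T : ℝ} (hT : 0 < T) : (T / ·) '' Ioo 0 1 = Ioi T := by
  ext v
  simp only [mem_image, mem_Ioo, mem_Ioi]
  constructor
  · rintro ⟨y, ⟨hy0, hy1⟩, rfl⟩
    rwa [lt_div_iff₀ hy0, mul_lt_iff_lt_one_right hT]
  · intro hv
    have hv0 := hT.trans hv
    exact ⟨T / v, ⟨by positivity, (div_lt_one hv0).2 hv⟩, div_div_cancel₀ hT.ne'⟩

theorem hasDerivAt_const_div {T y : ℝ} (hy : y ≠ 0) :
    HasDerivAt (T / ·) (-T / y ^ 2) y := by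
  simpa using (hasDerivAt_const y T).fun_div (hasDerivAt_id y) hy

theorem injOn_const_div {T : ℝ} (hT : T ≠ 0) (s : Set ℝ) : InjOn (T / ·) s := by
  intro y _ z _ h
  exact inv_injective (mul_left_cancel₀ hT (by simpa only [div_eq_mul_inv] using h))

/-- The integrand `(v² - τ²)^{α-1} γ_v(ξ)` of the Fourier transform of the kernel, at
`z = (ξ, τ, v)`. -/
noncomputable def coneGaussian (α : ℝ) (z : ℝ × ℝ × ℝ) : ℝ :=
  coneDensity α z.2 * dualGaussian z.2.2 z.1

/-- The function `∫_{v > |τ|} (v² - τ²)^{α-1} γ_v(ξ) dv` of `p = (ξ, τ)`, which is the Fourier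
transform of `(x⁴ + t²)^{-α}` up to the factor `coneConst α`. -/
noncomputable def coneFourier (α : ℝ) (p : ℝ × ℝ) : ℝ :=
  ∫ v, coneGaussian α (p.1, p.2, v)

theorem coneGaussian_nonneg (α : ℝ) (z : ℝ × ℝ × ℝ) : 0 ≤ coneGaussian α z :=
  mul_nonneg (coneDensity_nonneg α _) (dualGaussian_nonneg _ _)

@[fun_prop]
theorem measurable_coneGaussian (α : ℝ) : Measurable (coneGaussian α) := by
  unfold coneGaussian
  fun_prop

theorem stronglyMeasurable_coneFourier (α : ℝ) : StronglyMeasurable (coneFourier α) :=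
  StronglyMeasurable.integral_prod_right
    (f := fun (p : ℝ × ℝ) (v : ℝ) => coneGaussian α (p.1, p.2, v))
    (Measurable.stronglyMeasurable (by fun_prop))

theorem coneGaussian_eq_indicator (α ξ τ : ℝ) :
    (fun v => coneGaussian α (ξ, τ, v)) =
      (Ioi |τ|).indicator fun v => (v ^ 2 - τ ^ 2) ^ (α - 1) * dualGaussian v ξ := by
  ext v
  rw [coneGaussian, coneDensity, ite_mul, zero_mul]
  rfl

/-- The substitution `v = |τ| / y` turns the cone integrand into that of `betaLaplace`. -/
theorem abs_deriv_smul_coneGaussian {α τ y : ℝ} (hτ : τ ≠ 0) (ξ : ℝ) (hy : y ∈ Ioo (0 : ℝ) 1) :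
    |-|τ| / y ^ 2| • (((|τ| / y) ^ 2 - τ ^ 2) ^ (α - 1) * dualGaussian (|τ| / y) ξ) =
      2 ^ (-(1 / 2) : ℝ) * |τ| ^ (-(3 / 2 - 2 * α)) * (betaWeight α (3 / 2 - 2 * α) y *
        Real.exp (-(π * ξ ^ 2 / (2 * |τ|) * y))) := by
  have hT : 0 < |τ| := abs_pos.2 hτ
  have hy0 : 0 < y := hy.1
  have hy1 := one_sub_sq_pos hy
  have hv : 0 < |τ| / y := div_pos hT hy0
  have hderiv : |-|τ| / y ^ 2| = |τ|⁻¹ * (|τ| / y) ^ (2 : ℝ) := by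
    rw [neg_div, abs_neg, abs_of_pos (by positivity), Real.rpow_two]
    field_simp
  have hcone : ((|τ| / y) ^ 2 - τ ^ 2) ^ (α - 1) =
      (|τ| / y) ^ (2 * (α - 1)) * (1 - y ^ 2) ^ (α - 1) := by
    rw [Real.rpow_mul hv.le, Real.rpow_two, ← Real.mul_rpow (by positivity) hy1.le, ← sq_abs τ]
    congr 1
    field_simp
  have hexp : -π * ξ ^ 2 / (2 * (|τ| / y)) = -(π * ξ ^ 2 / (2 * |τ|) * y) := by
    field_simp
  have hpow : |τ|⁻¹ * ((|τ| / y) ^ (2 : ℝ) * (|τ| / y) ^ (2 * (α - 1)) *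
      (|τ| / y) ^ (-(1 / 2) : ℝ)) = |τ| ^ (-(3 / 2 - 2 * α)) * y ^ (3 / 2 - 2 * α - 1) := by
    rw [← Real.rpow_add hv, ← Real.rpow_add hv, Real.div_rpow hT.le hy0.le, div_eq_mul_inv,
      ← Real.rpow_neg hy0.le, ← Real.rpow_neg_one, ← mul_assoc, ← Real.rpow_add hT]
    ring_nf
  rw [hderiv, hcone, dualGaussian_of_pos hv, Real.mul_rpow two_pos.le hv.le, hexp, betaWeight,
    smul_eq_mul]
  linear_combination 2 ^ (-(1 / 2) : ℝ) * (1 - y ^ 2) ^ (α - 1) *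
    Real.exp (-(π * ξ ^ 2 / (2 * |τ|) * y)) * hpow

section Slice

variable {α τ : ℝ}

theorem integrable_coneGaussian_slice (hα : α ∈ Ioo (0 : ℝ) (3 / 4)) (hτ : τ ≠ 0) (ξ : ℝ) :
    Integrable fun v => coneGaussian α (ξ, τ, v) := by
  have hT : 0 < |τ| := abs_pos.2 hτ
  rw [coneGaussian_eq_indicator, integrable_indicator_iff measurableSet_Ioi,
    ← image_const_div_Ioo_zero_one hT,
    integrableOn_image_iff_integrableOn_abs_deriv_smul measurableSet_Ioo
      (fun y hy => (hasDerivAt_const_div hy.1.ne').hasDerivWithinAt) (injOn_const_div hT.ne' _),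
    integrableOn_congr_fun (fun y hy => abs_deriv_smul_coneGaussian hτ ξ hy) measurableSet_Ioo]
  exact (integrableOn_betaWeight_mul_exp hα.1 (by linarith [hα.2]) (by positivity)).const_mul _

theorem coneFourier_eq_mul_betaLaplace (hτ : τ ≠ 0) (ξ : ℝ) :
    coneFourier α (ξ, τ) = 2 ^ (-(1 / 2) : ℝ) * |τ| ^ (-(3 / 2 - 2 * α)) *
      betaLaplace α (3 / 2 - 2 * α) (π * ξ ^ 2 / (2 * |τ|)) := by
  have hT : 0 < |τ| := abs_pos.2 hτ
  rw [coneFourier, coneGaussian_eq_indicator, integral_indicator measurableSet_Ioi,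
    ← image_const_div_Ioo_zero_one hT,
    integral_image_eq_integral_abs_deriv_smul measurableSet_Ioo
      (fun y hy => (hasDerivAt_const_div hy.1.ne').hasDerivWithinAt) (injOn_const_div hT.ne' _),
    setIntegral_congr_fun measurableSet_Ioo fun y hy => abs_deriv_smul_coneGaussian hτ ξ hy,
    integral_const_mul, betaLaplace]

end Slice

theorem coneFourier_pos {α : ℝ} (hα : α ∈ Ioo (0 : ℝ) (3 / 4)) {p : ℝ × ℝ} (hp : p.2 ≠ 0) :
    0 < coneFourier α p := by
  rw [← Prod.mk.eta (p := p), coneFourier_eq_mul_betaLaplace hp]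
  have := betaLaplace_pos (c := π * p.1 ^ 2 / (2 * |p.2|)) hα.1
    (show 0 < 3 / 2 - 2 * α by linarith [hα.2]) (by positivity)
  positivity

theorem abs_rpow_mul_one_add_rpow_le_koranyiKernel {β : ℝ} (hβ : 0 ≤ β) {p : ℝ × ℝ} (hp : p.2 ≠ 0) :
    |p.2| ^ (-β) * (1 + π * p.1 ^ 2 / (2 * |p.2|)) ^ (-β) ≤ koranyiKernel (2 * β) p := by
  have hT : 0 < |p.2| := abs_pos.2 hp
  have hle : p.1 ^ 2 + |p.2| ≤ |p.2| * (1 + π * p.1 ^ 2 / (2 * |p.2|)) := by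
    have hmul : |p.2| * (1 + π * p.1 ^ 2 / (2 * |p.2|)) = |p.2| + π / 2 * p.1 ^ 2 := by
      field_simp
    nlinarith [Real.two_le_pi, sq_nonneg p.1]
  have hsq : p.1 ^ 4 + p.2 ^ 2 ≤ (|p.2| * (1 + π * p.1 ^ 2 / (2 * |p.2|))) ^ (2 : ℝ) := by
    rw [Real.rpow_two]
    refine le_trans ?_ (pow_le_pow_left₀ (by positivity) hle 2)
    rw [← sq_abs p.2]
    nlinarith [mul_nonneg (sq_nonneg p.1) hT.le]
  calc
    |p.2| ^ (-β) * (1 + π * p.1 ^ 2 / (2 * |p.2|)) ^ (-β)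
    _ = ((|p.2| * (1 + π * p.1 ^ 2 / (2 * |p.2|))) ^ (2 : ℝ)) ^ (-(2 * β / 4)) := by
        rw [← Real.mul_rpow hT.le (by positivity), ← Real.rpow_mul (by positivity)]
        ring_nf
    _ ≤ koranyiKernel (2 * β) p :=
        Real.rpow_le_rpow_of_nonpos (by positivity) hsq (by linarith)

theorem exists_coneFourier_le {α : ℝ} (hα : α ∈ Ioo (0 : ℝ) (3 / 4)) :
    ∃ C, 0 < C ∧ ∀ p : ℝ × ℝ, p.2 ≠ 0 →
      coneFourier α p ≤ C * koranyiKernel (3 - 4 * α) p := by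
  have hβ : 0 < 3 / 2 - 2 * α := by linarith [hα.2]
  obtain ⟨C, hC, hle⟩ := exists_betaLaplace_le hα.1 hβ
  refine ⟨2 ^ (-(1 / 2) : ℝ) * C, by positivity, fun p hp => ?_⟩
  set c := π * p.1 ^ 2 / (2 * |p.2|)
  calc
    coneFourier α p
    _ = 2 ^ (-(1 / 2) : ℝ) * |p.2| ^ (-(3 / 2 - 2 * α)) * betaLaplace α (3 / 2 - 2 * α) c :=
        coneFourier_eq_mul_betaLaplace hp p.1
    _ ≤ 2 ^ (-(1 / 2) : ℝ) * |p.2| ^ (-(3 / 2 - 2 * α)) *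
          (C * (1 + c) ^ (-(3 / 2 - 2 * α))) := by
        gcongr
        exact hle c (by positivity)
    _ = 2 ^ (-(1 / 2) : ℝ) * C *
          (|p.2| ^ (-(3 / 2 - 2 * α)) * (1 + c) ^ (-(3 / 2 - 2 * α))) := by ring
    _ ≤ 2 ^ (-(1 / 2) : ℝ) * C * koranyiKernel (2 * (3 / 2 - 2 * α)) p := by
        gcongr
        exact abs_rpow_mul_one_add_rpow_le_koranyiKernel hβ.le hp
    _ = 2 ^ (-(1 / 2) : ℝ) * C * koranyiKernel (3 - 4 * α) p := by ring_nf

theorem isTemperedFun_coneFourier {α : ℝ} (hα : α ∈ Ioo (0 : ℝ) (3 / 4)) :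
    IsTemperedFun (coneFourier α) volume := by
  obtain ⟨C, -, hle⟩ := exists_coneFourier_le hα
  refine (isTemperedFun_koranyiKernel (s := 3 - 4 * α)
    ⟨by linarith [hα.2], by linarith [hα.1]⟩).mono (C := C)
    (stronglyMeasurable_coneFourier α).aestronglyMeasurable ?_
  filter_upwards [ae_ne_zero_snd] with p hp
  rw [abs_of_pos (coneFourier_pos hα hp)]
  exact hle p hp

/-! ### Fourier inversion on the plane -/

/-- The Fourier transform of a Schwartz function on `ℝ × ℝ`, as a Schwartz function. Mathlib's
Fourier transform requires an inner product space, hence the passage through `WithLp 2`. -/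
noncomputable def schwartzFourier2 (φ : 𝓢(ℝ × ℝ, ℂ)) : 𝓢(ℝ × ℝ, ℂ) :=
  let e := WithLp.prodContinuousLinearEquiv 2 ℝ ℝ ℝ
  SchwartzMap.compCLMOfContinuousLinearEquiv ℝ e.symm
    (FourierTransform.fourier (SchwartzMap.compCLMOfContinuousLinearEquiv ℝ e φ))

/-- The inverse Fourier transform on `ℝ × ℝ`. -/
noncomputable def fourierInv2 (ψ : ℝ × ℝ → ℂ) (q : ℝ × ℝ) : ℂ :=
  ∫ p : ℝ × ℝ, Complex.exp (2 * π * (p.1 * q.1 + p.2 * q.2) * Complex.I) * ψ p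

theorem integral_withLp_two_prod {F : Type*} [NormedAddCommGroup F] [NormedSpace ℝ F]
    (f : ℝ × ℝ → F) :
    ∫ a : WithLp 2 (ℝ × ℝ), f (WithLp.prodContinuousLinearEquiv 2 ℝ ℝ ℝ a) = ∫ p, f p :=
  (WithLp.volume_preserving_ofLp ℝ ℝ).integral_comp
    (WithLp.prodContinuousLinearEquiv 2 ℝ ℝ ℝ).toHomeomorph.measurableEmbedding f

theorem coe_schwartzFourier2 (φ : 𝓢(ℝ × ℝ, ℂ)) : ⇑(schwartzFourier2 φ) = fourier2 φ := by
  ext ξ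
  simp only [schwartzFourier2, SchwartzMap.compCLMOfContinuousLinearEquiv_apply,
    Function.comp_apply, SchwartzMap.fourier_coe]
  rw [Real.fourier_eq', fourier2, ← integral_withLp_two_prod]
  congr with a
  rw [WithLp.prod_inner_apply, smul_eq_mul]
  congr 2
  simp only [WithLp.ofLp_fst, WithLp.ofLp_snd, WithLp.prodContinuousLinearEquiv_symm_apply,
    WithLp.prodContinuousLinearEquiv_apply, RCLike.inner_apply, Real.ringHom_apply]
  push_cast
  ring

theorem fourierInv2_schwartzFourier2 (φ : 𝓢(ℝ × ℝ, ℂ)) :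
    fourierInv2 (schwartzFourier2 φ) = φ := by
  ext q
  set e := WithLp.prodContinuousLinearEquiv 2 ℝ ℝ ℝ with he
  set Φ : 𝓢(WithLp 2 (ℝ × ℝ), ℂ) := SchwartzMap.compCLMOfContinuousLinearEquiv ℝ e φ with hΦ
  have hinv : FourierTransformInv.fourierInv (FourierTransform.fourier Φ) (e.symm q) = φ q := by
    rw [FourierPair.fourierInv_fourier_eq, hΦ,
      SchwartzMap.compCLMOfContinuousLinearEquiv_apply, Function.comp_apply, e.apply_symm_apply]
  rw [← hinv, SchwartzMap.fourierInv_coe, Real.fourierInv_eq', fourierInv2,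
    ← integral_withLp_two_prod]
  congr with a
  rw [WithLp.prod_inner_apply, smul_eq_mul]
  congr 1
  congr 2
  simp [he, mul_comm]

/-! ### The Parseval identity for the kernel -/

theorem norm_cexp_two_pi_mul (t τ b v : ℝ) :
    ‖Complex.exp (2 * π * (t * τ * Complex.I - b * v))‖ = Real.exp (-(2 * π * (b * v))) := by
  rw [Complex.norm_exp]
  congr 1
  have h : (2 * π * (t * τ * Complex.I - b * v) : ℂ) =
      ((-(2 * π * (b * v)) : ℝ) : ℂ) + ((2 * π * (t * τ) : ℝ) : ℂ) * Complex.I := by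
    push_cast
    ring
  rw [h, Complex.add_re, Complex.re_ofReal_mul, Complex.I_re, mul_zero, add_zero,
    Complex.ofReal_re]

theorem norm_coneDensity_mul_cexp_le (α : ℝ) {b c : ℝ} (h : b ≤ c) (t u : ℝ) (q : ℝ × ℝ) :
    ‖(coneDensity α q : ℂ) * Complex.exp (2 * π * (t * q.1 * Complex.I - c * q.2))‖ ≤
      ‖(coneDensity α q : ℂ) * Complex.exp (2 * π * (u * q.1 * Complex.I - b * q.2))‖ := by
  rw [norm_mul, norm_mul, norm_cexp_two_pi_mul, norm_cexp_two_pi_mul]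
  rcases lt_or_ge |q.1| q.2 with hq | hq
  · have hv : 0 < q.2 := (abs_nonneg _).trans_lt hq
    gcongr
  · simp [coneDensity, hq.not_gt]

section Integrable

variable {ψ : ℝ × ℝ → ℂ}

theorem integral_fourierInv2_mul_dualGaussian (hψ : Integrable ψ) {v : ℝ} (hv : 0 < v) (τ : ℝ) :
    ∫ ξ : ℝ, fourierInv2 ψ (ξ, τ) * dualGaussian v ξ =
      ∫ p, ψ p * Complex.exp (2 * π * (p.2 * τ * Complex.I - p.1 ^ 2 * v)) := by
  have hint : Integrable (Function.uncurry fun (ξ : ℝ) (p : ℝ × ℝ) =>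
      Complex.exp (2 * π * (p.1 * ξ + p.2 * τ) * Complex.I) * ψ p * dualGaussian v ξ)
      (volume.prod volume) := by
    have hphase : Measurable fun z : ℝ × ℝ × ℝ =>
        Complex.exp (2 * π * (z.2.1 * z.1 + z.2.2 * τ) * Complex.I) := by fun_prop
    refine (((integrable_dualGaussian v).ofReal.mul_prod hψ).bdd_mul (c := 1)
      hphase.aestronglyMeasurable (Eventually.of_forall fun z => ?_)).congr
      (Eventually.of_forall fun z => ?_)
    · exact_mod_cast (Complex.norm_exp_ofReal_mul_I (2 * π * (z.2.1 * z.1 + z.2.2 * τ))).le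
    · rw [Function.uncurry, mul_assoc, mul_comm (ψ z.2)]
      rfl
  calc
    ∫ ξ : ℝ, fourierInv2 ψ (ξ, τ) * dualGaussian v ξ
    _ = ∫ ξ : ℝ, ∫ p : ℝ × ℝ,
          Complex.exp (2 * π * (p.1 * ξ + p.2 * τ) * Complex.I) * ψ p * dualGaussian v ξ := by
        simp only [fourierInv2, ← integral_mul_const]
    _ = ∫ p : ℝ × ℝ, ∫ ξ : ℝ,
          Complex.exp (2 * π * (p.1 * ξ + p.2 * τ) * Complex.I) * ψ p * dualGaussian v ξ :=
        integral_integral_swap hint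
    _ = ∫ p : ℝ × ℝ, ψ p * Complex.exp (2 * π * (p.2 * τ) * Complex.I) *
          ∫ ξ : ℝ, Complex.exp (2 * π * (p.1 * ξ) * Complex.I) * dualGaussian v ξ := by
        congr with p
        rw [← integral_const_mul]
        congr with ξ
        rw [mul_add, add_mul, Complex.exp_add]
        ring
    _ = ∫ p, ψ p * Complex.exp (2 * π * (p.2 * τ * Complex.I - p.1 ^ 2 * v)) := by
        congr with p
        rw [integral_cexp_mul_dualGaussian hv, mul_assoc, ← Complex.exp_add]
        ring_nf

theorem integrable_mul_coneDensity_mul_cexp (hψ : Integrable ψ) {α ε : ℝ} (hα : 0 < α)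
    (hε : 0 < ε) :
    Integrable (fun z : (ℝ × ℝ) × ℝ × ℝ => ψ z.1 * (coneDensity α z.2 *
      Complex.exp (2 * π * (z.1.2 * z.2.1 * Complex.I - (z.1.1 ^ 2 + ε : ℝ) * z.2.2))))
      (volume.prod volume) := by
  refine (hψ.norm.mul_prod (integrable_coneDensity_mul_cexp hα hε 0).norm).mono'
    (hψ.aestronglyMeasurable.comp_fst.mul (Measurable.aestronglyMeasurable (by fun_prop)))
    (Eventually.of_forall fun z => ?_)
  rw [norm_mul]
  gcongr
  exact norm_coneDensity_mul_cexp_le α (le_add_of_nonneg_left (sq_nonneg _)) _ _ _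

theorem integral_mul_coneDensity_mul_cexp (hψ : Integrable ψ) (α ε : ℝ) (q : ℝ × ℝ) :
    ∫ p, ψ p * (coneDensity α q *
        Complex.exp (2 * π * (p.2 * q.1 * Complex.I - (p.1 ^ 2 + ε : ℝ) * q.2))) =
      ∫ ξ : ℝ, (coneGaussian α (ξ, q) * Real.exp (-(2 * π * (ε * q.2)))) •
        fourierInv2 ψ (ξ, q.1) := by
  rcases lt_or_ge |q.1| q.2 with hq | hq
  · have hexp (p : ℝ × ℝ) :
        Complex.exp (2 * π * (p.2 * q.1 * Complex.I - (p.1 ^ 2 + ε : ℝ) * q.2)) =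
          Complex.exp (-(2 * π * (ε * q.2)) : ℝ) *
            Complex.exp (2 * π * (p.2 * q.1 * Complex.I - p.1 ^ 2 * q.2)) := by
      rw [← Complex.exp_add]
      push_cast
      ring_nf
    calc
      _ = coneDensity α q * Real.exp (-(2 * π * (ε * q.2))) *
            ∫ p, ψ p * Complex.exp (2 * π * (p.2 * q.1 * Complex.I - p.1 ^ 2 * q.2)) := by
          rw [← integral_const_mul]
          congr with p
          rw [hexp, Complex.ofReal_exp]
          ring
      _ = _ := by
          rw [← integral_fourierInv2_mul_dualGaussian hψ ((abs_nonneg _).trans_lt hq),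
            ← integral_const_mul]
          congr with ξ
          rw [coneGaussian, Complex.real_smul]
          push_cast
          ring
  · simp [coneGaussian, coneDensity, hq.not_gt]

/-- The Parseval identity for the regularized kernel `((x² + ε)² + t²)^{-α}`, for which the cone
integral converges absolutely. -/
theorem coneConst_smul_integral_regularized (hψ : Integrable ψ) {α ε : ℝ} (hα : 0 < α)
    (hε : 0 < ε) :
    coneConst α • ∫ p : ℝ × ℝ, ((p.1 ^ 2 + ε) ^ 2 + p.2 ^ 2) ^ (-α) • ψ p =
      ∫ q : ℝ × ℝ, ∫ ξ : ℝ, (coneGaussian α (ξ, q) * Real.exp (-(2 * π * (ε * q.2)))) •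
        fourierInv2 ψ (ξ, q.1) := by
  simp only [← integral_mul_coneDensity_mul_cexp hψ]
  rw [← integral_integral_swap (integrable_mul_coneDensity_mul_cexp hψ hα hε), ← integral_smul]
  congr with p
  rw [integral_const_mul, integral_coneDensity_mul_cexp hα (by positivity), smul_smul,
    Complex.real_smul, mul_comm]

end Integrable

theorem integrable_coneGaussian_smul_assoc {α : ℝ} (hα : α ∈ Ioo (0 : ℝ) (3 / 4))
    (φ : 𝓢(ℝ × ℝ, ℂ)) :
    Integrable fun z : (ℝ × ℝ) × ℝ => coneGaussian α (z.1.1, z.1.2, z.2) • φ z.1 := by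
  have hφ : Measurable φ := φ.continuous.measurable
  refine (integrable_prod_iff (Measurable.aestronglyMeasurable (by fun_prop))).2 ⟨?_, ?_⟩
  · filter_upwards [ae_ne_zero_snd] with p hp
    exact (integrable_coneGaussian_slice hα hp p.1).smul_const _
  · refine ((isTemperedFun_coneFourier hα).integrable_smul_schwartz φ).norm.congr
      (Eventually.of_forall fun p => ?_)
    have hnonneg : 0 ≤ coneFourier α p := integral_nonneg fun v => coneGaussian_nonneg α _
    simp only [norm_smul, Real.norm_of_nonneg (coneGaussian_nonneg α _),
      Real.norm_of_nonneg hnonneg, integral_mul_const]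
    rfl

theorem integrable_coneGaussian_smul {α : ℝ} (hα : α ∈ Ioo (0 : ℝ) (3 / 4)) (φ : 𝓢(ℝ × ℝ, ℂ)) :
    Integrable fun z : ℝ × ℝ × ℝ => coneGaussian α z • φ (z.1, z.2.1) :=
  (volume_preserving_prodAssoc.integrable_comp_emb
    MeasurableEquiv.prodAssoc.measurableEmbedding).1 (integrable_coneGaussian_smul_assoc hα φ)

theorem integral_coneGaussian_smul {α : ℝ} (hα : α ∈ Ioo (0 : ℝ) (3 / 4)) (φ : 𝓢(ℝ × ℝ, ℂ)) :
    ∫ z : ℝ × ℝ × ℝ, coneGaussian α z • φ (z.1, z.2.1) = ∫ p, coneFourier α p • φ p := by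
  calc
    _ = ∫ z : (ℝ × ℝ) × ℝ, coneGaussian α (z.1.1, z.1.2, z.2) • φ z.1 :=
        (volume_preserving_prodAssoc.integral_comp
          MeasurableEquiv.prodAssoc.measurableEmbedding _).symm
    _ = ∫ p : ℝ × ℝ, ∫ v, coneGaussian α (p.1, p.2, v) • φ p :=
        integral_prod _ (integrable_coneGaussian_smul_assoc hα φ)
    _ = ∫ p, coneFourier α p • φ p := by
        simp only [integral_smul_const, coneFourier]

theorem norm_coneGaussian_mul_exp_smul_le (α : ℝ) {ε : ℝ} (hε : 0 ≤ ε) (z : ℝ × ℝ × ℝ) (w : ℂ) :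
    ‖(coneGaussian α z * Real.exp (-(2 * π * (ε * z.2.2)))) • w‖ ≤ ‖coneGaussian α z • w‖ := by
  rw [norm_smul, norm_smul, norm_mul, Real.norm_of_nonneg (Real.exp_pos _).le]
  refine mul_le_mul_of_nonneg_right ?_ (norm_nonneg _)
  rcases lt_or_ge |z.2.1| z.2.2 with hz | hz
  · have hv : 0 < z.2.2 := (abs_nonneg _).trans_lt hz
    refine mul_le_of_le_one_right (norm_nonneg _) (Real.exp_le_one_iff.2 ?_)
    rw [Left.neg_nonpos_iff]
    positivity
  · simp [coneGaussian, coneDensity, hz.not_gt]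

theorem integral_integral_coneGaussian_mul_exp_smul {α ε : ℝ} (hα : α ∈ Ioo (0 : ℝ) (3 / 4))
    (hε : 0 ≤ ε) (φ : 𝓢(ℝ × ℝ, ℂ)) :
    ∫ q : ℝ × ℝ, ∫ ξ : ℝ, (coneGaussian α (ξ, q) * Real.exp (-(2 * π * (ε * q.2)))) • φ (ξ, q.1) =
      ∫ z : ℝ × ℝ × ℝ,
        (coneGaussian α z * Real.exp (-(2 * π * (ε * z.2.2)))) • φ (z.1, z.2.1) := by
  have hφ : Measurable φ := φ.continuous.measurable
  exact (integral_prod_symm _ ((integrable_coneGaussian_smul hα φ).mono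
    (Measurable.aestronglyMeasurable (by fun_prop))
    (Eventually.of_forall fun z => norm_coneGaussian_mul_exp_smul_le α hε z _))).symm

theorem tendsto_integral_coneGaussian_mul_exp_smul {α : ℝ} (hα : α ∈ Ioo (0 : ℝ) (3 / 4))
    (φ : 𝓢(ℝ × ℝ, ℂ)) :
    Tendsto (fun ε => ∫ z : ℝ × ℝ × ℝ,
        (coneGaussian α z * Real.exp (-(2 * π * (ε * z.2.2)))) • φ (z.1, z.2.1))
      (𝓝[>] 0) (𝓝 (∫ p, coneFourier α p • φ p)) := by
  have hφ : Measurable φ := φ.continuous.measurable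
  rw [← integral_coneGaussian_smul hα]
  refine tendsto_integral_filter_of_dominated_convergence _
    (Eventually.of_forall fun ε => Measurable.aestronglyMeasurable (by fun_prop)) ?_
    (integrable_coneGaussian_smul hα φ).norm (Eventually.of_forall fun z => ?_)
  · filter_upwards [self_mem_nhdsWithin] with ε (hε : 0 < ε)
    exact Eventually.of_forall fun z => norm_coneGaussian_mul_exp_smul_le α hε.le z _
  · have hcont : Continuous fun ε =>
        (coneGaussian α z * Real.exp (-(2 * π * (ε * z.2.2)))) • φ (z.1, z.2.1) := by fun_prop
    simpa using (hcont.tendsto 0).mono_left nhdsWithin_le_nhds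

theorem tendsto_integral_regularized_smul {α : ℝ} (hα : α ∈ Ioo (0 : ℝ) (3 / 4))
    (ψ : 𝓢(ℝ × ℝ, ℂ)) :
    Tendsto (fun ε => ∫ p : ℝ × ℝ, ((p.1 ^ 2 + ε) ^ 2 + p.2 ^ 2) ^ (-α) • ψ p)
      (𝓝[>] 0) (𝓝 (∫ p, koranyiKernel (4 * α) p • ψ p)) := by
  have hψ : Measurable ψ := ψ.continuous.measurable
  have hint := (isTemperedFun_koranyiKernel (s := 4 * α)
    ⟨by linarith [hα.1], by linarith [hα.2]⟩).integrable_smul_schwartz ψ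
  have hkernel (p : ℝ × ℝ) :
      koranyiKernel (4 * α) p = ((p.1 ^ 2 + 0) ^ 2 + p.2 ^ 2) ^ (-α) := by
    rw [koranyiKernel]
    ring_nf
  refine tendsto_integral_filter_of_dominated_convergence _
    (Eventually.of_forall fun ε => Measurable.aestronglyMeasurable (by fun_prop)) ?_
    hint.norm ?_
  · filter_upwards [self_mem_nhdsWithin] with ε (hε : 0 < ε)
    filter_upwards [ae_ne_zero_fst] with p hp
    rw [norm_smul, norm_smul, Real.norm_of_nonneg (by positivity),
      Real.norm_of_nonneg (koranyiKernel_nonneg _ _), hkernel]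
    refine mul_le_mul_of_nonneg_right (Real.rpow_le_rpow_of_nonpos (by positivity) ?_
      (neg_nonpos.2 hα.1.le)) (norm_nonneg _)
    gcongr
  · filter_upwards [ae_ne_zero_fst] with p hp
    have hcont : ContinuousAt (fun ε : ℝ => ((p.1 ^ 2 + ε) ^ 2 + p.2 ^ 2) ^ (-α) • ψ p) 0 :=
      (ContinuousAt.rpow_const (by fun_prop) (Or.inl (by positivity))).smul continuousAt_const
    rw [hkernel]
    exact hcont.tendsto.mono_left nhdsWithin_le_nhds

theorem coneConst_smul_integral_koranyiKernel {α : ℝ} (hα : α ∈ Ioo (0 : ℝ) (3 / 4))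
    (φ : 𝓢(ℝ × ℝ, ℂ)) :
    coneConst α • ∫ p, koranyiKernel (4 * α) p • fourier2 φ p = ∫ p, coneFourier α p • φ p := by
  rw [← coe_schwartzFourier2]
  refine tendsto_nhds_unique
    ((tendsto_integral_regularized_smul hα (schwartzFourier2 φ)).const_smul (coneConst α))
    ((tendsto_integral_coneGaussian_mul_exp_smul hα φ).congr' ?_)
  filter_upwards [self_mem_nhdsWithin] with ε (hε : 0 < ε)
  rw [coneConst_smul_integral_regularized (schwartzFourier2 φ).integrable hα.1 hε,
    fourierInv2_schwartzFourier2, integral_integral_coneGaussian_mul_exp_smul hα hε.le]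

/-- The locally integrable function representing the Fourier transform of `koranyiKernel s`. -/
noncomputable def koranyiFourier (s : ℝ) (ξ : ℝ × ℝ) : ℝ :=
  (coneConst (s / 4))⁻¹ * coneFourier (s / 4) ξ

section Koranyi

variable {s : ℝ}

theorem div_four_mem_Ioo (hs : s ∈ Ioo (0 : ℝ) 3) : s / 4 ∈ Ioo (0 : ℝ) (3 / 4) :=
  ⟨by linarith [hs.1], by linarith [hs.2]⟩

theorem koranyiFourier_pos (hs : s ∈ Ioo (0 : ℝ) 3) {ξ : ℝ × ℝ} (hξ : ξ.2 ≠ 0) :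
    0 < koranyiFourier s ξ :=
  mul_pos (inv_pos.2 (coneConst_pos (div_four_mem_Ioo hs).1))
    (coneFourier_pos (div_four_mem_Ioo hs) hξ)

theorem exists_koranyiFourier_le (hs : s ∈ Ioo (0 : ℝ) 3) :
    ∃ C, 0 < C ∧ ∀ ξ : ℝ × ℝ, ξ.2 ≠ 0 → koranyiFourier s ξ ≤ C * koranyiKernel (3 - s) ξ := by
  have hconst := inv_pos.2 (coneConst_pos (div_four_mem_Ioo hs).1)
  obtain ⟨C, hC, hle⟩ := exists_coneFourier_le (div_four_mem_Ioo hs)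
  rw [mul_div_cancel₀ s four_ne_zero] at hle
  refine ⟨(coneConst (s / 4))⁻¹ * C, mul_pos hconst hC, fun ξ hξ => ?_⟩
  rw [koranyiFourier, mul_assoc]
  exact mul_le_mul_of_nonneg_left (hle ξ hξ) hconst.le

theorem locallyIntegrable_koranyiFourier (hs : s ∈ Ioo (0 : ℝ) 3) :
    LocallyIntegrable (koranyiFourier s) :=
  (isTemperedFun_coneFourier (div_four_mem_Ioo hs)).locallyIntegrable.smul (coneConst (s / 4))⁻¹

theorem integral_fourier2_mul_koranyiKernel (hs : s ∈ Ioo (0 : ℝ) 3) (φ : 𝓢(ℝ × ℝ, ℂ)) :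
    ∫ p, fourier2 φ p * (koranyiKernel s p : ℂ) = ∫ ξ, φ ξ * (koranyiFourier s ξ : ℂ) := by
  have hconst := (coneConst_pos (div_four_mem_Ioo hs).1).ne'
  calc
    ∫ p, fourier2 φ p * (koranyiKernel s p : ℂ)
    _ = ∫ p, koranyiKernel (4 * (s / 4)) p • fourier2 φ p := by
        simp only [mul_div_cancel₀ s four_ne_zero, Complex.real_smul, mul_comm]
    _ = (coneConst (s / 4))⁻¹ • ∫ ξ, coneFourier (s / 4) ξ • φ ξ := by
        rw [← coneConst_smul_integral_koranyiKernel (div_four_mem_Ioo hs), inv_smul_smul₀ hconst]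
    _ = ∫ ξ, φ ξ * (koranyiFourier s ξ : ℂ) := by
        rw [← integral_smul]
        congr with ξ
        rw [smul_smul, ← koranyiFourier, Complex.real_smul, mul_comm]

end Koranyi

theorem koranyiKernel_fourier_general (s : ℝ) (hs : s ∈ Set.Ioo (0 : ℝ) 3) :
    MeasureTheory.LocallyIntegrable (koranyiKernel s) MeasureTheory.volume ∧
    (∃ M : ℝ, ∀ p : ℝ × ℝ, 1 ≤ ‖p‖ → |koranyiKernel s p| ≤ M) ∧
    (∃ T : SchwartzMap (ℝ × ℝ) ℝ →L[ℝ] ℝ, ∀ φ : SchwartzMap (ℝ × ℝ) ℝ,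
      T φ = ∫ p : ℝ × ℝ, φ p * koranyiKernel s p) ∧
    ∃ (g : ℝ × ℝ → ℝ) (C : ℝ), 0 < C ∧
      MeasureTheory.LocallyIntegrable g MeasureTheory.volume ∧
      (∀ φ : SchwartzMap (ℝ × ℝ) ℂ,
        (∫ p : ℝ × ℝ, fourier2 (fun q => φ q) p * (koranyiKernel s p : ℂ)) =
        ∫ ξ : ℝ × ℝ, φ ξ * (g ξ : ℂ)) ∧
      (∀ ξ : ℝ × ℝ, ξ.2 ≠ 0 → 0 < g ξ ∧ g ξ ≤ C * koranyiKernel (3 - s) ξ) := by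
  obtain ⟨C, hC, hle⟩ := exists_koranyiFourier_le hs
  have hf := isTemperedFun_koranyiKernel (Ioo_subset_Ico_self hs)
  refine ⟨hf.locallyIntegrable, ⟨1, fun p hp => ?_⟩, ?_, koranyiFourier s, C, hC,
    locallyIntegrable_koranyiFourier hs, integral_fourier2_mul_koranyiKernel hs,
    fun ξ hξ => ⟨koranyiFourier_pos hs hξ, hle ξ hξ⟩⟩
  · rw [abs_of_nonneg (koranyiKernel_nonneg s p)]
    exact koranyiKernel_le_one hs.1.le hp
  · obtain ⟨T, hT⟩ := hf.exists_clm_eq_integral (F := ℝ)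
    exact ⟨T, fun φ => by simp only [hT, smul_eq_mul, mul_comm]⟩

/-- **Lemma 3.2 (first part).** For `s ∈ (0,3)`, the Korányi kernel `f_s` is locally integrable
and bounded outside the unit ball, and `φ ↦ ∫ φ f_s` defines a tempered distribution on `ℝ²`.
Moreover, if `s ∈ (1,3)` then there are a locally integrable `g` and a constant `C_s > 0`
such that `g` represents the distributional Fourier transform of `f_s`
(`∫ φ̂ f_s = ∫ φ g` for all Schwartz `φ`) and `0 < g(ξ) ≤ C_s f_{3-s}(ξ)` whenever `ξ₂ ≠ 0`. -/
theorem koranyiKernel_fourier (s : ℝ) (hs : s ∈ Set.Ioo (0 : ℝ) 3) :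
    MeasureTheory.LocallyIntegrable (koranyiKernel s) MeasureTheory.volume ∧
    (∃ M : ℝ, ∀ p : ℝ × ℝ, 1 ≤ ‖p‖ → |koranyiKernel s p| ≤ M) ∧
    (∃ T : SchwartzMap (ℝ × ℝ) ℝ →L[ℝ] ℝ, ∀ φ : SchwartzMap (ℝ × ℝ) ℝ,
      T φ = ∫ p : ℝ × ℝ, φ p * koranyiKernel s p) ∧
    (s ∈ Set.Ioo (1 : ℝ) 3 →
      ∃ (g : ℝ × ℝ → ℝ) (C : ℝ), 0 < C ∧
        MeasureTheory.LocallyIntegrable g MeasureTheory.volume ∧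
        (∀ φ : SchwartzMap (ℝ × ℝ) ℂ,
          (∫ p : ℝ × ℝ, fourier2 (fun q => φ q) p * (koranyiKernel s p : ℂ)) =
          ∫ ξ : ℝ × ℝ, φ ξ * (g ξ : ℂ)) ∧
        (∀ ξ : ℝ × ℝ, ξ.2 ≠ 0 → 0 < g ξ ∧ g ξ ≤ C * koranyiKernel (3 - s) ξ)) := by
  obtain ⟨hint, hbdd, hdist, hfourier⟩ := koranyiKernel_fourier_general s hs
  exact ⟨hint, hbdd, hdist, fun _ => hfourier⟩
end
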